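/- arXiv:2501.18600 — 11 statements merged into one kernel-verified Lean document; each statement's English description precedes it below -/
import Mathlib

section
/- Let L = 2m+1 ≥ 3 be an odd integer and let U = U^{M,L}_L be the time-evolution operator of the L-state M-type Grover walk on the cycle with L vertices. Then the period of the walk equals 2L; that is, U^{2L} = I and U^n ≠ I for every integer n with 1 ≤ n < 2L. -/
open Matrix Polynomial

/-- The M-type Grover coin `A^{M,L}` for `L = 2m+1`: diagonal entries `-(2m-1)/L`,
off-diagonal entries `2/L`. -/
noncomputable def coinM (m : ℕ) : Matrix (Fin (2*m+1)) (Fin (2*m+1)) ℂ :=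
  fun i j => if i = j then (1 - 2*(m:ℂ)) / (2*(m:ℂ)+1) else 2 / (2*(m:ℂ)+1)

/-- The F-type Grover coin `A^{F,L}` for `L = 2m+1`: anti-diagonal entries `-(2m-1)/L`,
all other entries `2/L`. -/
noncomputable def coinF (m : ℕ) : Matrix (Fin (2*m+1)) (Fin (2*m+1)) ℂ :=
  fun i j => if (i : ℕ) + (j : ℕ) = 2*m then (1 - 2*(m:ℂ)) / (2*(m:ℂ)+1)
    else 2 / (2*(m:ℂ)+1)

/-- The time-evolution operator of the `L`-state (`L = 2m+1`) Grover walk with local coin `A`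
on the cycle `C_N`: entry at `((v,i),(w,j))` is `A i j` if `v ≡ w + (i - m) (mod N)`,
and `0` otherwise. -/
noncomputable def walkU (m N : ℕ) (A : Matrix (Fin (2*m+1)) (Fin (2*m+1)) ℂ) :
    Matrix ((ZMod N) × Fin (2*m+1)) ((ZMod N) × Fin (2*m+1)) ℂ :=
  fun p q => if p.1 = q.1 + ((p.2 : ℕ) : ZMod N) - (m : ZMod N) then A p.2 q.2 else 0

/-- `ζ_N = exp(2πi/N)`. -/
noncomputable def zetaN (N : ℕ) : ℂ := Complex.exp (2 * Real.pi * Complex.I / N)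

/-- The diagonal matrix `Z = diag(ζ_N^m, ζ_N^{m-1}, …, ζ_N^{-m})`. -/
noncomputable def Zmat (N m : ℕ) : Matrix (Fin (2*m+1)) (Fin (2*m+1)) ℂ :=
  Matrix.diagonal fun i => zetaN N ^ ((m : ℤ) - ((i : ℕ) : ℤ))

/-- The integer power `Z^k` of the diagonal matrix `Z`, defined for any `k ∈ ℤ`. -/
noncomputable def ZmatPow (N m : ℕ) (k : ℤ) : Matrix (Fin (2*m+1)) (Fin (2*m+1)) ℂ :=
  Matrix.diagonal fun i => zetaN N ^ ((((m : ℤ) - ((i : ℕ) : ℤ))) * k)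

/-- `f^{M,L}_{N,k}(x) = det(x·I_L − Z^k A^{M,L})`. -/
noncomputable def fMk (m N : ℕ) (k : ℤ) : Polynomial ℂ :=
  (ZmatPow N m k * coinM m).charpoly

/-- `f^{M,L}_N(x) = ∏_{k=0}^{N-1} f^{M,L}_{N,k}(x)`. -/
noncomputable def fM (m N : ℕ) : Polynomial ℂ :=
  ∏ k ∈ Finset.range N, fMk m N (k : ℤ)

/-- `f^{F,L}_{N,k}(x) = det(x·I_L − Z^k A^{F,L})`. -/
noncomputable def fFk (m N : ℕ) (k : ℤ) : Polynomial ℂ :=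
  (ZmatPow N m k * coinF m).charpoly

/-- `f^{F,L}_N(x) = ∏_{k=0}^{N-1} f^{F,L}_{N,k}(x)`. -/
noncomputable def fF (m N : ℕ) : Polynomial ℂ :=
  ∏ k ∈ Finset.range N, fFk m N (k : ℤ)

section helper

/-- Abstract involution lemma. -/
lemma abstract_period {R G : Type*} [Ring R] [AddCommGroup G] (S : G → R) (C : R) (g : G)
    (hS0 : S 0 = 1) (hS : ∀ a b, S (a + b) = S a * S b) (hC : C * C = 1)
    (hcomm : ∀ k, C * (S k * C * S (-k)) = (S k * C * S (-k)) * C) (N : ℕ) (hN : N • g = 0) :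
    (S g * C) ^ (2 * N) = 1 := by
  have hinv : ∀ a, S (-a) * S a = 1 := fun a => by rw [← hS]; simp [hS0]
  have hinv' : ∀ a, S a * S (-a) = 1 := fun a => by rw [← hS]; simp [hS0]
  obtain ⟨Q, hQ⟩ : ∃ Q : G → R, ∀ a, Q a = S a * C * S (-a) := ⟨_, fun _ => rfl⟩
  have hQ2 : ∀ a, Q a * Q a = 1 := by
    intro a
    calc Q a * Q a = S a * C * (S (-a) * S a) * C * S (-a) := by rw [hQ]; noncomm_ring
      _ = S a * (C * C) * S (-a) := by rw [hinv]; noncomm_ring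
      _ = 1 := by rw [hC, mul_one, hinv']
  have key : ∀ a b, Q a * Q b = S a * (C * (S (b - a) * C * S (-(b - a)))) * S (-a) := by
    intro a b
    have h1 : S (b - a) = S (-a) * S b := by rw [← hS]; congr 1; abel
    have h2 : S (-(b - a)) * S (-a) = S (-b) := by rw [← hS]; congr 1; abel
    calc Q a * Q b = S a * C * (S (-a) * S b) * C * S (-b) := by rw [hQ, hQ]; noncomm_ring
      _ = _ := by rw [← h1, ← h2]; noncomm_ring
  have key' : ∀ a b, Q b * Q a = S a * ((S (b - a) * C * S (-(b - a))) * C) * S (-a) := by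
    intro a b
    have h1 : S a * S (b - a) = S b := by rw [← hS]; congr 1; abel
    have h2 : S (-(b - a)) = S (-b) * S a := by rw [← hS]; congr 1; abel
    calc Q b * Q a = S b * C * (S (-b) * S a) * C * S (-a) := by rw [hQ, hQ]; noncomm_ring
      _ = _ := by rw [← h1, ← h2]; noncomm_ring
  have hQc : ∀ a b, Q a * Q b = Q b * Q a := by
    intro a b
    rw [key, key', hcomm]
  have hB : ∀ n : ℕ, ∃ B : R, B * B = 1 ∧ (∀ a, B * Q a = Q a * B) ∧
      (S g * C) ^ n = B * S (n • g) := by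
    intro n
    induction n with
    | zero => exact ⟨1, by simp, by simp, by simp [hS0]⟩
    | succ n ih =>
      obtain ⟨B, h1, h2, h3⟩ := ih
      refine ⟨B * Q ((n + 1) • g), ?_, ?_, ?_⟩
      · calc B * Q ((n + 1) • g) * (B * Q ((n + 1) • g))
            = B * (Q ((n + 1) • g) * B) * Q ((n + 1) • g) := by noncomm_ring
          _ = (B * B) * (Q ((n + 1) • g) * Q ((n + 1) • g)) := by rw [← h2]; simp only [mul_assoc]
          _ = 1 := by rw [h1, hQ2, one_mul]
      · intro a
        rw [mul_assoc, hQc, ← mul_assoc, h2, mul_assoc]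
      · rw [pow_succ, h3, hQ]
        calc B * S (n • g) * (S g * C) = B * (S (n • g) * S g) * C := by simp only [mul_assoc]
          _ = B * S ((n + 1) • g) * C * (S (-((n + 1) • g)) * S ((n + 1) • g)) := by
            rw [hinv, ← hS, succ_nsmul, mul_one]
          _ = _ := by simp only [mul_assoc]
  obtain ⟨B, h1, -, h3⟩ := hB N
  rw [mul_comm 2 N, pow_mul, h3, hN, hS0, mul_one, sq, h1]

lemma sum_fin_zmod (m : ℕ) (f : ZMod (2*m+1) → ℂ) :
    ∑ c : Fin (2*m+1), f ((c : ℕ) : ZMod (2*m+1)) = ∑ x, f x := by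
  refine Fintype.sum_equiv (ZMod.finEquiv (2*m+1)).toEquiv _ _ ?_
  intro c
  congr 1
  exact Fin.cast_val_eq_self c

/-- State space. -/
abbrev St (m : ℕ) := ZMod (2*m+1) × Fin (2*m+1) → ℂ

/-- Shift operators. -/
def shiftOp (m : ℕ) (k : ZMod (2*m+1)) : Module.End ℂ (St m) where
  toFun ψ := fun p => ψ (p.1 - k * (((p.2 : ℕ) : ZMod (2*m+1)) - m), p.2)
  map_add' _ _ := rfl
  map_smul' _ _ := rfl

/-- Coin operator. -/
noncomputable def coinOp (m : ℕ) : Module.End ℂ (St m) where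
  toFun ψ := fun p => 2 / (2*(m:ℂ)+1) * ∑ c, ψ (p.1, c) - ψ p
  map_add' a b := by
    ext p
    simp only [Pi.add_apply, Finset.sum_add_distrib]
    ring
  map_smul' r a := by
    ext p
    simp only [Pi.smul_apply, smul_eq_mul, ← Finset.mul_sum, RingHom.id_apply]
    ring

lemma L_ne (m : ℕ) : (2*(m:ℂ)+1) ≠ 0 := by
  have : ((2*m+1 : ℕ) : ℂ) ≠ 0 := Nat.cast_ne_zero.mpr (by omega)
  push_cast at this
  exact this

lemma coinOp_apply (m : ℕ) (ψ : St m) (p) :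
    coinOp m ψ p = 2 / (2*(m:ℂ)+1) * ∑ c, ψ (p.1, c) - ψ p := rfl

lemma shiftOp_apply (m : ℕ) (k) (ψ : St m) (p) :
    shiftOp m k ψ p = ψ (p.1 - k * (((p.2 : ℕ) : ZMod (2*m+1)) - m), p.2) := rfl

lemma walk_mulVec (m : ℕ) (ψ : St m) :
    (walkU m (2*m+1) (coinM m)) *ᵥ ψ = (shiftOp m 1 * coinOp m) ψ := by
  ext ⟨v, i⟩
  rw [Module.End.mul_apply, shiftOp_apply, coinOp_apply]
  have hw : ∀ q : ZMod (2*m+1) × Fin (2*m+1), walkU m (2*m+1) (coinM m) (v, i) q =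
      if v = q.1 + ((i : ℕ) : ZMod (2*m+1)) - (m : ZMod (2*m+1)) then
        (2 / (2*(m:ℂ)+1) - if i = q.2 then 1 else 0) else 0 := by
    intro q
    have := L_ne m
    unfold walkU coinM
    congr 1
    dsimp only
    split_ifs
    · field_simp
      ring
    · ring
  simp only [Matrix.mulVec, dotProduct, hw, Fintype.sum_prod_type]
  rw [Finset.sum_eq_single (v - 1 * (((i : ℕ) : ZMod (2*m+1)) - m))]
  · have h : v = v - 1 * (((i : ℕ) : ZMod (2*m+1)) - m) + ((i : ℕ) : ZMod (2*m+1)) - m := by ring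
    simp only [if_pos h]
    simp only [sub_mul, Finset.sum_sub_distrib, ite_mul, one_mul, zero_mul,
      Finset.sum_ite_eq, Finset.mem_univ, if_true, Finset.mul_sum]
  · intro w _ hw
    apply Finset.sum_eq_zero
    intro j _
    rw [if_neg, zero_mul]
    rintro rfl
    apply hw
    ring
  · simp

lemma walk_toLin (m : ℕ) :
    Matrix.toLinAlgEquiv' (walkU m (2*m+1) (coinM m)) = shiftOp m 1 * coinOp m := by
  apply LinearMap.ext
  intro ψ
  rw [Matrix.toLinAlgEquiv'_apply, walk_mulVec]

lemma double_sum (m : ℕ) (ψ : St m) (v k : ZMod (2*m+1)) (i : Fin (2*m+1)) :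
    ∑ d : Fin (2*m+1), ∑ c : Fin (2*m+1), ψ (v - k * (((d : ℕ) : ZMod (2*m+1)) - m)
      - -k * (((c : ℕ) : ZMod (2*m+1)) - m), c) =
    ∑ c : Fin (2*m+1), ∑ d : Fin (2*m+1), ψ (v - k * (((i : ℕ) : ZMod (2*m+1)) - m)
      - -k * (((c : ℕ) : ZMod (2*m+1)) - m), d) := by
  rw [Finset.sum_comm]
  rw [Finset.sum_comm (s := Finset.univ) (t := Finset.univ) (f := fun (c d : Fin (2*m+1)) => ψ (v - k *
    (((i : ℕ) : ZMod (2*m+1)) - m) - -k * (((c : ℕ) : ZMod (2*m+1)) - m), d))]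
  refine Finset.sum_congr rfl fun c _ => ?_
  rw [sum_fin_zmod m (fun x => ψ (v - k * (x - m) - -k * (((c : ℕ) : ZMod (2*m+1)) - m), c)),
    sum_fin_zmod m (fun x => ψ (v - k * (((i : ℕ) : ZMod (2*m+1)) - m) - -k * (x - m), c))]
  refine Fintype.sum_equiv
    (Equiv.subLeft (((i : ℕ) : ZMod (2*m+1)) + ((c : ℕ) : ZMod (2*m+1)))) _ _ fun x => ?_
  simp only [Equiv.subLeft_apply]
  congr 2
  ring

lemma walk_pow (m : ℕ) : (walkU m (2*m+1) (coinM m)) ^ (2*(2*m+1)) = 1 := by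
  apply (Matrix.toLinAlgEquiv' (R := ℂ) (n := ZMod (2*m+1) × Fin (2*m+1))).injective
  rw [map_pow, map_one, walk_toLin]
  apply abstract_period (shiftOp m) (coinOp m) 1
  · apply LinearMap.ext; intro ψ; ext p
    simp only [shiftOp_apply, Module.End.one_apply, zero_mul, sub_zero]
  · intro a b
    apply LinearMap.ext; intro ψ; ext p
    simp only [Module.End.mul_apply, shiftOp_apply]
    congr 2
    ring
  · apply LinearMap.ext; intro ψ; ext p
    have := L_ne m
    simp only [Module.End.mul_apply, coinOp_apply, Module.End.one_apply, Finset.sum_sub_distrib,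
      Finset.sum_const, Finset.card_univ, Fintype.card_fin, nsmul_eq_mul]
    push_cast
    field_simp
    ring
  · intro k
    apply LinearMap.ext; intro ψ; ext ⟨v, i⟩
    simp only [Module.End.mul_apply, coinOp_apply, shiftOp_apply, Finset.sum_sub_distrib,
      ← Finset.mul_sum]
    have hd := double_sum m ψ v k i
    have e : ∀ (w : ZMod (2*m+1)) (i : Fin (2*m+1)), w - k * (((i : ℕ) : ZMod (2*m+1)) - m)
        - -k * (((i : ℕ) : ZMod (2*m+1)) - m) = w := fun w i => by ring
    simp only [e, hd]
    ring
  · simp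

lemma eig_pow {n : Type*} [Fintype n] [DecidableEq n] (U : Matrix n n ℂ) (x : n → ℂ) (μ : ℂ)
    (h : U *ᵥ x = μ • x) (k : ℕ) (hk : U ^ k = 1) (p : n) (hp : x p ≠ 0) : μ ^ k = 1 := by
  have : ∀ k : ℕ, (U ^ k) *ᵥ x = μ ^ k • x := by
    intro k
    induction k with
    | zero => simp
    | succ k ih => rw [pow_succ, ← Matrix.mulVec_mulVec, h, Matrix.mulVec_smul, ih, smul_smul, pow_succ']
  have h2 := congrFun (this k) p
  rw [hk, Matrix.one_mulVec, Pi.smul_apply, smul_eq_mul] at h2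
  exact (mul_right_cancel₀ hp (by rw [one_mul]; exact h2)).symm

lemma even_of_pow (m : ℕ) (hm : 1 ≤ m) (n : ℕ) (h : (walkU m (2*m+1) (coinM m)) ^ n = 1) :
    Even n := by
  have h01 : (⟨0, by omega⟩ : Fin (2*m+1)) ≠ ⟨1, by omega⟩ := by simp
  have := eig_pow _ (fun p : ZMod (2*m+1) × Fin (2*m+1) => if p.2 = ⟨0, by omega⟩ then 1 else if p.2 = ⟨1, by omega⟩ then -1 else 0)
    (-1) ?_ n h (0, ⟨0, by omega⟩) (by simp)
  · rcases Nat.even_or_odd n with h | h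
    · exact h
    · rw [h.neg_one_pow] at this
      norm_num at this
  · rw [walk_mulVec]
    ext p
    rw [Module.End.mul_apply, shiftOp_apply, coinOp_apply]
    have : ∑ c : Fin (2*m+1), (if c = ⟨0, by omega⟩ then (1:ℂ) else if c = ⟨1, by omega⟩ then -1 else 0) = 0 := by
      have : ∀ c : Fin (2*m+1), (if c = ⟨0, by omega⟩ then (1:ℂ) else if c = ⟨1, by omega⟩ then -1 else 0)
        = (if c = ⟨0, by omega⟩ then (1:ℂ) else 0) - (if c = ⟨1, by omega⟩ then 1 else 0) := by
        intro c
        split_ifs with h1 h2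
        · rw [h1] at h2; exact absurd h2 h01
        all_goals simp
      simp only [this, Finset.sum_sub_distrib, Finset.sum_ite_eq', Finset.mem_univ, if_true, sub_self]
    simp only [this]
    simp

lemma dvd_of_pow (m : ℕ) (n : ℕ) (h : (walkU m (2*m+1) (coinM m)) ^ n = 1) :
    (2*m+1) ∣ n := by
  obtain ⟨χ, hχ⟩ : ∃ χ : AddChar (ZMod (2*m+1)) ℂ, Function.Injective χ :=
    ⟨ZMod.stdAddChar, ZMod.injective_stdAddChar⟩
  have h2 : (2 : ZMod (2*m+1)) * (-m) = 1 := by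
    have : ((2*m+1 : ℕ) : ZMod (2*m+1)) = 0 := ZMod.natCast_self _
    push_cast at this
    linear_combination -this
  have hne : ∀ a, χ a ≠ 0 := fun a => by
    intro h0
    have := χ.map_add_eq_mul a (-a)
    rw [h0, zero_mul, add_neg_cancel, AddChar.map_zero_eq_one] at this
    exact one_ne_zero this
  have hadd : ∀ a, χ 1 + χ a ≠ 0 := by
    intro a ha
    have h1 : χ (1 + 1) = χ (a + a) := by
      rw [χ.map_add_eq_mul, χ.map_add_eq_mul]
      linear_combination (χ 1 - χ a) * ha
    have h3 : 1 = a := by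
      have := hχ h1
      linear_combination (-m : ZMod (2*m+1)) * this - (1 - a) * h2
    rw [← h3, ← two_mul] at ha
    exact hne 1 (by simpa using ha)
  have hsum : ∑ a, χ a / (χ 1 + χ a) = (2*(m:ℂ)+1) / 2 := by
    have e : ∑ a, χ a / (χ 1 + χ a) = ∑ a, χ (2 - a) / (χ 1 + χ (2 - a)) :=
      (Fintype.sum_equiv (Equiv.subLeft 2) _ _ (fun a => by simp)).symm
    have s : ∑ a, (χ a / (χ 1 + χ a) + χ (2 - a) / (χ 1 + χ (2 - a))) = (2*(m:ℂ)+1) := by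
      rw [Finset.sum_congr rfl (g := fun _ => 1)]
      · simp
      · intro a _
        have := hadd a
        have h3 := hadd (2 - a)
        have h4 : χ (2 - a) * χ a = χ 1 * χ 1 := by
          rw [← χ.map_add_eq_mul, ← χ.map_add_eq_mul]
          congr 1
          ring
        rw [div_add_div _ _ this h3, div_eq_one_iff_eq (mul_ne_zero this h3)]
        linear_combination h4
    rw [Finset.sum_add_distrib, ← e] at s
    linear_combination s / 2
  have hs2 : ∑ c : Fin (2*m+1), χ (m - (c : ℕ)) / (χ 1 + χ (m - (c : ℕ))) = (2*(m:ℂ)+1) / 2 := by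
    rw [sum_fin_zmod m (fun x => χ (m - x) / (χ 1 + χ (m - x))), ← hsum]
    exact Fintype.sum_equiv (Equiv.subLeft (m : ZMod (2*m+1))) _ _ (fun a => by simp)
  have := eig_pow _ (fun p => χ p.1 * (χ (m - (p.2 : ℕ)) / (χ 1 + χ (m - (p.2 : ℕ)))))
    (χ 1) ?_ n h (0, 0) (mul_ne_zero (hne _) (div_ne_zero (hne _) (hadd _)))
  · rw [← AddChar.map_nsmul_eq_pow, ← χ.map_zero_eq_one] at this
    have := hχ this
    rw [nsmul_one] at this
    exact (ZMod.natCast_eq_zero_iff _ _).mp this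
  · rw [walk_mulVec]
    ext ⟨v, i⟩
    rw [Module.End.mul_apply, shiftOp_apply, coinOp_apply]
    simp only [← Finset.mul_sum, hs2, Pi.smul_apply, smul_eq_mul]
    have e : v - 1 * (((i : ℕ) : ZMod (2*m+1)) - m) = v + (m - (i : ℕ)) := by ring
    rw [e, χ.map_add_eq_mul]
    have := L_ne m
    have h3 := hadd (m - (i : ℕ))
    field_simp
    ring

end helper

/-- For odd `L = 2m+1 ≥ 3`, the M-type Grover walk on the cycle with `L`
vertices has period `2L`: `U^{2L} = I` and `U^n ≠ I` for `1 ≤ n < 2L`. -/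
theorem stmt0 (m : ℕ) (hm : 1 ≤ m) :
    (walkU m (2*m+1) (coinM m)) ^ (2*(2*m+1)) = 1 ∧
    ∀ n : ℕ, 1 ≤ n → n < 2*(2*m+1) → (walkU m (2*m+1) (coinM m)) ^ n ≠ 1 := by
  refine ⟨walk_pow m, fun n h1 h2 h => ?_⟩
  obtain ⟨k, hk⟩ := even_of_pow m hm n h
  have hd := dvd_of_pow m n h
  have : 2*(2*m+1) ∣ n := by
    apply Nat.Coprime.mul_dvd_of_dvd_of_dvd _ (by omega) hd
    rw [Nat.coprime_comm]
    simp
  exact absurd (Nat.le_of_dvd (by omega) this) (by omega)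
end

section
/- Let L ≥ 3 be a prime number (necessarily odd, L = 2m+1) and let N ≥ 2 with N ≠ L. Then the L-state M-type Grover walk on the cycle with N vertices has infinite period; that is, (U^{M,L}_N)^n ≠ I for every integer n ≥ 1. -/
open Matrix Polynomial

/-- The trace of a finite-order complex matrix is an algebraic integer. -/
lemma aux_trace_integral {ι : Type*} [Fintype ι] [DecidableEq ι] (B : Matrix ι ι ℂ) (n : ℕ)
    (hn : 1 ≤ n) (h : B ^ n = 1) : IsIntegral ℤ B.trace := by
  rw [Matrix.trace_eq_sum_roots_charpoly]
  have key : ∀ x ∈ B.charpoly.roots, IsIntegral ℤ x := by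
    intro x hx
    have hx1 : B.charpoly.IsRoot x := (Polynomial.mem_roots'.1 hx).2
    rw [← Matrix.mem_spectrum_iff_isRoot_charpoly] at hx1
    have h2 := spectrum.pow_mem_pow B n hx1
    rw [h] at h2
    have : Nontrivial (Matrix ι ι ℂ) := by
      by_contra hc
      rw [not_nontrivial_iff_subsingleton] at hc
      simp [spectrum.of_subsingleton] at h2
    rw [spectrum.one_eq] at h2
    exact IsIntegral.of_pow (n := n) hn (by rw [Set.mem_singleton_iff.1 h2]; exact isIntegral_one)
  generalize B.charpoly.roots = s at key
  induction s using Multiset.induction_on with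
  | empty => simpa using isIntegral_zero
  | cons a s ih =>
    rw [Multiset.sum_cons]
    exact (key a (by simp)).add (ih fun x hx => key x (by simp [hx]))

lemma aux_two (z : ℂ) (h1 : ‖z‖ = 1) (hz : z ≠ 1) : ‖1 + z‖ < 2 := by
  have h3 : z.re * z.re + z.im * z.im = 1 := by
    have := Complex.normSq_eq_norm_sq z
    rw [h1, Complex.normSq_apply] at this; simpa using this
  have h4 : z.re ≠ 1 := by
    intro h
    apply hz
    apply Complex.ext
    · simpa using h
    · have : z.im * z.im = 0 := by rw [h] at h3; linarith
      simpa using this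
  have h5 : z.re < 1 := lt_of_le_of_ne (by nlinarith [mul_self_nonneg z.im]) h4
  have h6 := Complex.normSq_eq_norm_sq (1 + z)
  rw [Complex.normSq_apply] at h6
  simp only [Complex.add_re, Complex.one_re, Complex.add_im, Complex.one_im] at h6
  nlinarith [norm_nonneg (1 + z)]

lemma aux_sum (z : ℂ) (h1 : ‖z‖ = 1) (hz : z ≠ 1) (k : ℕ) :
    ‖∑ i ∈ Finset.range (k + 2), z ^ i‖ < k + 2 := by
  induction k with
  | zero =>
    have := aux_two z h1 hz
    simpa [Finset.sum_range_succ] using this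
  | succ k ih =>
    rw [Finset.sum_range_succ]
    have := norm_add_le (∑ i ∈ Finset.range (k + 2), z ^ i) (z ^ (k + 2))
    rw [norm_pow, h1, one_pow] at this
    push_cast
    linarith

/-- Intertwining with a Fourier block. -/
lemma aux_block (m N : ℕ) [NeZero N] (A : Matrix (Fin (2*m+1)) (Fin (2*m+1)) ℂ)
    (χ : AddChar (ZMod N) ℂ) (n : ℕ) (h : (walkU m N A) ^ n = 1) :
    (Matrix.of fun i j => χ (((i : ℕ) : ZMod N) - (m : ZMod N)) * A i j :
      Matrix (Fin (2*m+1)) (Fin (2*m+1)) ℂ) ^ n = 1 := by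
  set B : Matrix (Fin (2*m+1)) (Fin (2*m+1)) ℂ :=
    Matrix.of fun i j => χ (((i : ℕ) : ZMod N) - (m : ZMod N)) * A i j with hB
  let E : Matrix (ZMod N × Fin (2*m+1)) (Fin (2*m+1)) ℂ :=
    Matrix.of fun p j => if p.2 = j then χ (-p.1) else 0
  have hE : walkU m N A * E = E * B := by
    ext ⟨v, i⟩ j
    simp only [Matrix.mul_apply, Fintype.sum_prod_type, walkU, E, hB, Matrix.of_apply]
    rw [Finset.sum_eq_single (v - ((i : ℕ) : ZMod N) + (m : ZMod N))]
    · simp only [mul_ite, mul_zero, ite_mul, zero_mul, Finset.sum_ite_eq, Finset.sum_ite_eq',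
        Finset.mem_univ, if_true]
      rw [if_pos (by ring), ← mul_assoc, ← AddChar.map_add_eq_mul, mul_comm]
      congr 2
      ring
    · intro w _ hw
      apply Finset.sum_eq_zero
      intro k _
      rw [if_neg, zero_mul]
      intro h
      apply hw
      rw [h]; ring
    · simp
  have hpow : ∀ k : ℕ, (walkU m N A) ^ k * E = E * B ^ k := by
    intro k
    induction k with
    | zero => simp
    | succ k ih =>
      rw [pow_succ, pow_succ, Matrix.mul_assoc, hE, ← Matrix.mul_assoc, ih, Matrix.mul_assoc]
  have h2 := hpow n
  rw [h, Matrix.one_mul] at h2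
  ext i j
  have h3 := congrArg (fun M : Matrix (ZMod N × Fin (2*m+1)) (Fin (2*m+1)) ℂ => M (0, i) j) h2
  simp only [Matrix.mul_apply, E, Matrix.of_apply, neg_zero, AddChar.map_zero_eq_one, ite_mul, one_mul, zero_mul,
    Finset.sum_ite_eq, Finset.mem_univ, if_true] at h3
  rw [← h3, Matrix.one_apply]

lemma aux_norm_K (m N : ℕ) [NeZero N] (hm : 1 ≤ m) (hp : Nat.Prime (2*m+1))
    (hN : 2 ≤ N) (hNL : N ≠ 2*m+1) (K : Type) [Field K] [NumberField K] (ζ : K)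
    (hζ : IsPrimitiveRoot ζ N) :
    ∃ ω : ℂ, ω ^ N = 1 ∧
      ¬ IsIntegral ℤ ((∑ i ∈ Finset.range (2*m+1), ω ^ i) / (2*(m:ℂ)+1)) := by
  let φ : K →ₐ[ℚ] ℂ := IsAlgClosed.lift
  refine ⟨φ ζ, by rw [← map_pow, hζ.pow_eq_one, map_one], fun hint => ?_⟩
  set x : K := (∑ i ∈ Finset.range (2*m+1), ζ ^ i) / (2*(m:K)+1) with hx
  have hσ : ∀ σ : K →ₐ[ℚ] ℂ,
      σ x = (∑ i ∈ Finset.range (2*m+1), (σ ζ) ^ i) / (2*(m:ℂ)+1) := by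
    intro σ
    have h2 : σ 2 = 2 := map_ofNat σ 2
    simp [hx, map_div₀, map_sum, h2]
  rw [← hσ] at hint
  have hxi : IsIntegral ℤ x :=
    (isIntegral_algHom_iff (φ.restrictScalars ℤ) φ.injective).1 hint
  have hL0 : (2*(m:K)+1) ≠ 0 := by
    have : ((2*m+1 : ℕ) : K) ≠ 0 := Nat.cast_ne_zero.2 (by omega)
    simpa using this
  have hx0 : x ≠ 0 := by
    rw [hx]
    refine div_ne_zero (fun h0 => ?_) hL0
    have h1 := geom_sum_mul ζ (2*m+1)
    rw [h0, zero_mul, eq_comm, sub_eq_zero] at h1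
    have h2 := hζ.dvd_of_pow_eq_one _ h1
    rcases (Nat.dvd_prime hp).1 h2 with h | h <;> omega
  have hlt : ∀ σ : K →ₐ[ℚ] ℂ, ‖σ x‖ < 1 := by
    intro σ
    have hpr : IsPrimitiveRoot (σ ζ) N := hζ.map_of_injective σ.injective
    have hn1 : ‖σ ζ‖ = 1 := Complex.norm_eq_one_of_pow_eq_one hpr.pow_eq_one (by omega)
    have hne : σ ζ ≠ 1 := hpr.ne_one (by omega)
    obtain ⟨k, rfl⟩ : ∃ k, m = k + 1 := ⟨m - 1, by omega⟩
    have := aux_sum (σ ζ) hn1 hne (2*k+1)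
    rw [hσ, norm_div]
    have hc : ‖(2*((k+1:ℕ):ℂ)+1)‖ = 2*(k:ℝ)+3 := by
      have : (2*((k+1:ℕ):ℂ)+1) = ((2*k+3 : ℕ) : ℂ) := by push_cast; ring
      rw [this, Complex.norm_natCast]; push_cast; ring
    rw [hc, div_lt_one (by positivity)]
    push_cast at this
    have e : 2*(k+1)+1 = 2*k+1+2 := by ring
    rw [e]
    linarith
  have hni : IsIntegral ℤ (Algebra.norm ℚ x) := Algebra.isIntegral_norm ℚ hxi
  obtain ⟨z, hz⟩ := IsIntegrallyClosed.isIntegral_iff.1 hni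
  have hprod := Algebra.norm_eq_prod_embeddings ℚ ℂ x
  have hn1 : ‖algebraMap ℚ ℂ (Algebra.norm ℚ x)‖ < 1 := by
    rw [hprod, norm_prod]
    have hpos : ∀ σ : K →ₐ[ℚ] ℂ, 0 < ‖σ x‖ := fun σ =>
      norm_pos_iff.2 ((map_ne_zero_iff σ σ.injective).2 hx0)
    calc ∏ σ : K →ₐ[ℚ] ℂ, ‖σ x‖ < ∏ σ : K →ₐ[ℚ] ℂ, (1:ℝ) :=
          Finset.prod_lt_prod_of_nonempty (fun σ _ => hpos σ) (fun σ _ => hlt σ) ⟨φ, by simp⟩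
      _ = 1 := by simp
  rw [← hz] at hn1
  have hz0 : z = 0 := by
    simp only [eq_intCast, map_intCast, Complex.norm_intCast] at hn1
    have : |z| < 1 := by exact_mod_cast hn1
    exact Int.abs_lt_one_iff.1 this
  rw [hz0, map_zero, eq_comm, Algebra.norm_eq_zero_iff] at hz
  exact hx0 hz

/-- The normalized geometric sum is not an algebraic integer. -/
lemma aux_norm (m N : ℕ) [NeZero N] (hm : 1 ≤ m) (hp : Nat.Prime (2*m+1))
    (hN : 2 ≤ N) (hNL : N ≠ 2*m+1) :
    ∃ ω : ℂ, ω ^ N = 1 ∧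
      ¬ IsIntegral ℤ ((∑ i ∈ Finset.range (2*m+1), ω ^ i) / (2*(m:ℂ)+1)) := by
  have : NeZero (N : ℚ) := ⟨Nat.cast_ne_zero.2 (by omega)⟩
  obtain ⟨ζ, hζ⟩ := (CyclotomicField.isCyclotomicExtension N ℚ).exists_isPrimitiveRoot
    (Set.mem_singleton N) (NeZero.ne N)
  exact aux_norm_K m N hm hp hN hNL (CyclotomicField N ℚ) ζ hζ

/-- For prime `L = 2m+1 ≥ 3` and `N ≥ 2` with `N ≠ L`, the M-type Grover walk
on the cycle with `N` vertices has infinite period: `U^n ≠ I` for all `n ≥ 1`. -/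
theorem stmt1 (m N : ℕ) [NeZero N] (hm : 1 ≤ m) (hp : Nat.Prime (2*m+1))
    (hN : 2 ≤ N) (hNL : N ≠ 2*m+1) :
    ∀ n : ℕ, 1 ≤ n → (walkU m N (coinM m)) ^ n ≠ 1 := by
  intro n hn h
  obtain ⟨ω, hω, hni⟩ := aux_norm m N hm hp hN hNL
  apply hni
  have hωi : IsIntegral ℤ ω :=
    IsIntegral.of_pow (n := N) (by omega) (by rw [hω]; exact isIntegral_one)
  let χ : AddChar (ZMod N) ℂ := AddChar.zmodChar N hω
  have hχ : ∀ a : ℕ, χ (a : ZMod N) = ω ^ a := fun a => AddChar.zmodChar_apply' hω a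
  have ht := aux_trace_integral _ n hn (aux_block m N (coinM m) χ n h)
  set S := ∑ i ∈ Finset.range (2*m+1), ω ^ i with hS
  have hSi : IsIntegral ℤ S := IsIntegral.sum _ fun i _ => hωi.pow i
  have hL0 : (2*(m:ℂ)+1) ≠ 0 := by
    have : ((2*m+1 : ℕ) : ℂ) ≠ 0 := Nat.cast_ne_zero.2 (by omega)
    simpa using this
  have h1 := (hωi.pow m).mul ht
  have h2 : ω ^ m * Matrix.trace (Matrix.of fun (i j : Fin (2*m+1)) =>
      χ (((i : ℕ) : ZMod N) - (m : ZMod N)) * coinM m i j) =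
      (1 - 2*(m:ℂ)) / (2*(m:ℂ)+1) * S := by
    rw [hS, Matrix.trace, Finset.mul_sum, Finset.mul_sum, ← Fin.sum_univ_eq_sum_range
      (fun i => (1 - 2*(m:ℂ)) / (2*(m:ℂ)+1) * ω ^ i)]
    apply Finset.sum_congr rfl
    intro i _
    simp only [Matrix.diag_apply, Matrix.of_apply, coinM, if_true]
    rw [← hχ m, ← hχ i, ← mul_assoc, ← AddChar.map_add_eq_mul, mul_comm]
    congr 2
    ring
  rw [h2] at h1
  have hmi : IsIntegral ℤ (m : ℂ) := by simpa using isIntegral_algebraMap (R := ℤ) (A := ℂ) (x := (m:ℤ))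
  have h3 := ((hmi.mul h1).neg).sub ((hmi.sub isIntegral_one).mul hSi)
  have h4 : S / (2*(m:ℂ)+1) =
      -((m:ℂ) * ((1 - 2*(m:ℂ)) / (2*(m:ℂ)+1) * S)) - ((m:ℂ) - 1) * S := by
    field_simp
    ring
  rw [h4]
  exact h3
end

section
/- Let L = 2m+1 ≥ 3 be an odd integer and let U = U^{F,L}_L be the time-evolution operator of the L-state F-type Grover walk on the cycle with L vertices. Then the period of the walk equals 4; that is, U^4 = I and U^n ≠ I for n = 1, 2, 3. -/
open Matrix Polynomial

/-- The signed displacement `i - m` as an element of `ZMod (2m+1)`. -/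
def shiftC (m : ℕ) (i : Fin (2*m+1)) : ZMod (2*m+1) := ((i : ℕ) : ZMod (2*m+1)) - (m : ZMod (2*m+1))

lemma shiftC_inj (m : ℕ) : Function.Injective (shiftC m) := by
  intro i j h
  unfold shiftC at h
  have h2 : ((i : ℕ) : ZMod (2*m+1)) = ((j : ℕ) : ZMod (2*m+1)) := by
    simpa using h
  rw [ZMod.natCast_eq_natCast_iff', Nat.mod_eq_of_lt i.2, Nat.mod_eq_of_lt j.2] at h2
  exact Fin.ext h2

lemma shiftC_bij (m : ℕ) : Function.Bijective (shiftC m) := by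
  rw [Fintype.bijective_iff_injective_and_card]
  exact ⟨shiftC_inj m, by simp [ZMod.card]⟩

/-- The equivalence given by `shiftC`. -/
noncomputable def shiftE (m : ℕ) : Fin (2*m+1) ≃ ZMod (2*m+1) :=
  Equiv.ofBijective _ (shiftC_bij m)

/-- Grover matrix on `ZMod (2m+1)`. -/
noncomputable def gro (m : ℕ) (x y : ZMod (2*m+1)) : ℂ :=
  2 / (2*(m:ℂ)+1) - if x = y then 1 else 0

lemma coinF_eq (m : ℕ) (i j : Fin (2*m+1)) :
    coinF m i j = gro m (shiftE m i) (- shiftE m j) := by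
  have key : ((i : ℕ) + (j : ℕ) = 2*m) ↔ shiftE m i = - shiftE m j := by
    have hr : - shiftE m j = shiftE m j.rev := by
      show -(shiftC m j) = shiftC m j.rev
      unfold shiftC
      have h1 : ((j.rev : ℕ) : ZMod (2*m+1)) + ((j : ℕ) : ZMod (2*m+1)) = 2 * (m : ZMod (2*m+1)) := by
        have : (j.rev : ℕ) + (j : ℕ) = 2*m := by
          rw [Fin.val_rev]; omega
        exact_mod_cast congrArg (Nat.cast : ℕ → ZMod (2*m+1)) this
      linear_combination -h1
    rw [hr, (shiftE m).injective.eq_iff, Fin.ext_iff, Fin.val_rev]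
    omega
  unfold coinF gro
  have := L_ne m
  by_cases h : (i : ℕ) + (j : ℕ) = 2*m
  · rw [if_pos h, if_pos (key.1 h)]; field_simp; ring
  · rw [if_neg h, if_neg (fun h' => h (key.2 h'))]; simp

lemma gro_sq (m : ℕ) (x y : ZMod (2*m+1)) :
    ∑ z, gro m x z * gro m z y = if x = y then 1 else 0 := by
  unfold gro
  have := L_ne m
  simp only [sub_mul, mul_sub, Finset.sum_sub_distrib, ite_mul, mul_ite, mul_one, mul_zero,
    one_mul, zero_mul, Finset.sum_ite_eq, Finset.sum_ite_eq', Finset.mem_univ, if_true,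
    Finset.sum_const, Finset.card_univ, ZMod.card, nsmul_eq_mul]
  push_cast
  field_simp
  ring

lemma walk_sq (m : ℕ) (p q : ZMod (2*m+1) × Fin (2*m+1)) :
    ((walkU m (2*m+1) (coinF m)) ^ 2) p q =
      gro m p.1 q.1 * gro m (p.1 - shiftE m p.2) (q.1 - shiftE m q.2) := by
  rw [pow_two, Matrix.mul_apply, Fintype.sum_prod_type, Finset.sum_comm]
  have h : ∀ (a b : ZMod (2*m+1) × Fin (2*m+1)), walkU m (2*m+1) (coinF m) a b =
      if a.1 - shiftE m a.2 = b.1 then gro m (shiftE m a.2) (- shiftE m b.2) else 0 := by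
    intro a b
    unfold walkU
    rw [coinF_eq]
    congr 1
    rw [sub_eq_iff_eq_add, add_sub_assoc]
    rfl
  simp only [h, ite_mul, zero_mul, Finset.sum_ite_eq, Finset.mem_univ, if_true]
  rw [Equiv.sum_comp (shiftE m) (fun k => gro m (shiftE m p.2) (-k) *
    if p.1 - shiftE m p.2 - k = q.1 then gro m k (- shiftE m q.2) else 0)]
  rw [Finset.sum_eq_single (p.1 - shiftE m p.2 - q.1)]
  · rw [if_pos (by ring)]
    unfold gro
    have e1 : (shiftE m p.2 = -(p.1 - shiftE m p.2 - q.1)) ↔ p.1 = q.1 := by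
      constructor <;> intro h <;> linear_combination h
    have e2 : (p.1 - shiftE m p.2 - q.1 = -shiftE m q.2) ↔
        p.1 - shiftE m p.2 = q.1 - shiftE m q.2 := by
      constructor <;> intro h <;> linear_combination h
    simp only [e1, e2]
  · intro b _ hb
    rw [if_neg, mul_zero]
    intro h'
    exact hb (by linear_combination -h')
  · simp

lemma walk_four (m : ℕ) : (walkU m (2*m+1) (coinF m)) ^ 4 = 1 := by
  rw [show 4 = 2 + 2 from rfl, pow_add]
  ext p q
  rw [Matrix.mul_apply, Fintype.sum_prod_type]
  simp only [walk_sq]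
  have h : ∀ w : ZMod (2*m+1), ∑ k : Fin (2*m+1),
      gro m p.1 w * gro m (p.1 - shiftE m p.2) (w - shiftE m k) *
      (gro m w q.1 * gro m (w - shiftE m k) (q.1 - shiftE m q.2)) =
      gro m p.1 w * gro m w q.1 *
        if p.1 - shiftE m p.2 = q.1 - shiftE m q.2 then 1 else 0 := by
    intro w
    rw [← gro_sq, Finset.mul_sum,
      ← Equiv.sum_comp ((shiftE m).trans (Equiv.subLeft w))]
    refine Finset.sum_congr rfl fun k _ => ?_
    simp only [Equiv.trans_apply, Equiv.subLeft_apply]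
    ring
  simp only [h]
  rw [← Finset.sum_mul, gro_sq, Matrix.one_apply]
  by_cases h1 : p.1 = q.1
  · by_cases h2 : p.2 = q.2
    · simp [h1, h2, Prod.ext_iff]
    · simp [h1, h2, Prod.ext_iff]
  · simp [h1, Prod.ext_iff]

lemma walk_two_ne (m : ℕ) (hm : 1 ≤ m) : (walkU m (2*m+1) (coinF m)) ^ 2 ≠ 1 := by
  intro h
  have : Fact (1 < 2*m+1) := ⟨by omega⟩
  have h1 := congrFun (congrFun h (0, (shiftE m).symm 0)) (1, (shiftE m).symm 0)
  rw [walk_sq, Matrix.one_apply_ne (by simp)] at h1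
  simp [gro] at h1
  exact L_ne m h1

/-- For odd `L = 2m+1 ≥ 3`, the F-type Grover walk on the cycle with `L`
vertices has period `4`: `U^4 = I` and `U^n ≠ I` for `n = 1, 2, 3`. -/
theorem stmt3 (m : ℕ) (hm : 1 ≤ m) :
    (walkU m (2*m+1) (coinF m)) ^ 4 = 1 ∧
    ∀ n : ℕ, 1 ≤ n → n < 4 → (walkU m (2*m+1) (coinF m)) ^ n ≠ 1 := by
  refine ⟨walk_four m, fun n h1 h4 h => ?_⟩
  have h2 := walk_two_ne m hm
  have h3 := walk_four m
  interval_cases n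
  · rw [pow_one] at h
    rw [h] at h2
    simp at h2
  · exact h2 h
  · rw [pow_succ, h, one_mul] at h3
    rw [h3] at h2
    simp at h2
end

section
/- Let L ≥ 3 be a prime number (necessarily odd, L = 2m+1) and let N ≥ 2 with N ≠ L. Then the L-state F-type Grover walk on the cycle with N vertices has infinite period; that is, (U^{F,L}_N)^n ≠ I for every integer n ≥ 1. -/
open Matrix Polynomial

/-- A nonnegative integer quotient that is integral over `ℤ` is an honest divisibility. -/
lemma dvd_of_isIntegral_div (a b : ℕ) (hb : b ≠ 0) (h : IsIntegral ℤ ((a : ℂ) / (b : ℂ))) :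
    b ∣ a := by
  have h1 : IsIntegral ℤ ((a : ℚ) / (b : ℚ)) := by
    rw [← isIntegral_algebraMap_iff (FaithfulSMul.algebraMap_injective ℚ ℂ)]
    simpa using h
  obtain ⟨z, hz⟩ := IsIntegrallyClosed.isIntegral_iff.mp h1
  have hb' : (b : ℚ) ≠ 0 := by exact_mod_cast hb
  have h2 : (a : ℚ) = b * (z : ℚ) := by
    rw [show (z : ℚ) = algebraMap ℤ ℚ z from rfl, hz]; field_simp
  have h3 : (a : ℤ) = b * z := by exact_mod_cast h2
  exact Int.natCast_dvd_natCast.mp ⟨z, h3⟩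

/-- The trace of a complex matrix of finite order is an algebraic integer. -/
lemma isIntegral_trace_of_pow_eq_one {ι : Type*} [Fintype ι] [DecidableEq ι]
    (M : Matrix ι ι ℂ) (n : ℕ) (hn : 1 ≤ n) (h : M ^ n = 1) : IsIntegral ℤ M.trace := by
  rw [Matrix.trace_eq_sum_roots_charpoly]
  refine IsIntegral.multiset_sum fun x hx => ?_
  have hx1 : x ∈ spectrum ℂ M := by
    rw [Matrix.mem_spectrum_iff_isRoot_charpoly]
    exact Polynomial.isRoot_of_mem_roots hx
  have hx2 := spectrum.pow_mem_pow M n hx1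
  rw [h] at hx2
  have hne : Nontrivial (Matrix ι ι ℂ) := by
    by_contra hh
    rw [not_nontrivial_iff_subsingleton] at hh
    simp at hx1
  rw [spectrum.one_eq] at hx2
  refine IsIntegral.of_pow (n := n) (by omega) ?_
  rw [Set.mem_singleton_iff.mp hx2]
  exact isIntegral_one

/-- The Fourier component of the evolution operator. -/
noncomputable def walkM (m N : ℕ) (A : Matrix (Fin (2*m+1)) (Fin (2*m+1)) ℂ)
    (φ : AddChar (ZMod N) ℂ) : Matrix (Fin (2*m+1)) (Fin (2*m+1)) ℂ :=
  fun i j => φ (((i : ℕ) : ZMod N) - (m : ZMod N)) * A i j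

/-- The intertwiner. -/
noncomputable def walkE (m N : ℕ) (φ : AddChar (ZMod N) ℂ) :
    Matrix (Fin (2*m+1)) ((ZMod N) × Fin (2*m+1)) ℂ :=
  fun k p => if k = p.2 then φ p.1 else 0

lemma walkE_mul (m N : ℕ) [NeZero N] (A : Matrix (Fin (2*m+1)) (Fin (2*m+1)) ℂ)
    (φ : AddChar (ZMod N) ℂ) :
    walkE m N φ * walkU m N A = walkM m N A φ * walkE m N φ := by
  ext k ⟨w, j⟩
  simp only [Matrix.mul_apply, walkE, walkU, walkM, Fintype.sum_prod_type]
  rw [Finset.sum_comm]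
  simp only [ite_mul, zero_mul, mul_ite, mul_zero]
  rw [Finset.sum_eq_single k]
  · simp only [if_true, Finset.sum_ite_eq', Finset.mem_univ]
    rw [add_sub_assoc, AddChar.map_add_eq_mul]; ring
  · intro b _ hb
    simp [hb.symm]
  · simp

lemma walkM_pow (m N : ℕ) [NeZero N] (A : Matrix (Fin (2*m+1)) (Fin (2*m+1)) ℂ)
    (φ : AddChar (ZMod N) ℂ) (n : ℕ) (h : walkU m N A ^ n = 1) : walkM m N A φ ^ n = 1 := by
  have key : ∀ n : ℕ, walkE m N φ * walkU m N A ^ n = walkM m N A φ ^ n * walkE m N φ := by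
    intro n
    induction n with
    | zero => simp
    | succ n ih =>
      rw [pow_succ, ← Matrix.mul_assoc, ih, Matrix.mul_assoc, walkE_mul, ← Matrix.mul_assoc,
        ← pow_succ]
  have h1 := key n
  rw [h, Matrix.mul_one] at h1
  ext i j
  have h2 := congrFun (congrFun h1 i) (0, j)
  simp only [Matrix.mul_apply, walkE, AddChar.map_zero_eq_one, mul_ite, mul_one, mul_zero,
    Finset.sum_ite_eq', Finset.mem_univ, if_true] at h2
  rw [← h2, Matrix.one_apply]

lemma key_integral (m N : ℕ) [NeZero N] (n : ℕ) (hn : 1 ≤ n)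
    (h : walkU m N (coinF m) ^ n = 1) (ω : ℂ) (hω : ω ^ N = 1) :
    IsIntegral ℤ (2 / ((2 * m + 1 : ℕ) : ℂ) * ∑ k ∈ Finset.range (2*m+1), ω ^ k) := by
  set φ := AddChar.zmodChar N hω with hφ
  have h1 := isIntegral_trace_of_pow_eq_one _ n hn (walkM_pow m N _ φ n h)
  have hne : (2 * (m : ℂ) + 1) ≠ 0 := by exact_mod_cast Nat.succ_ne_zero (2*m)
  have h2 : φ (m : ZMod N) * ((walkM m N (coinF m) φ).trace + 1) =
      2 / ((2 * m + 1 : ℕ) : ℂ) * ∑ k ∈ Finset.range (2*m+1), ω ^ k := by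
    have h3 : (walkM m N (coinF m) φ).trace =
        ∑ i : Fin (2*m+1), (φ (((i : ℕ) : ZMod N) - (m : ZMod N)) * (2 / (2*(m:ℂ)+1))
          - if i = (⟨m, by omega⟩ : Fin (2*m+1)) then 1 else 0) := by
      rw [Matrix.trace]
      refine Finset.sum_congr rfl fun i _ => ?_
      simp only [Matrix.diag, walkM, coinF]
      by_cases hi : (i : ℕ) = m
      · have : i = (⟨m, by omega⟩ : Fin (2*m+1)) := Fin.ext hi
        rw [if_pos (by omega), if_pos this, hi, sub_self, AddChar.map_zero_eq_one]
        field_simp; ring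
      · have : i ≠ (⟨m, by omega⟩ : Fin (2*m+1)) := fun hh => hi (by rw [hh])
        rw [if_neg (by omega), if_neg this, sub_zero]
    rw [h3, Finset.sum_sub_distrib, Finset.sum_ite_eq', if_pos (Finset.mem_univ _),
      sub_add_cancel, Finset.mul_sum, Finset.sum_range, Finset.mul_sum]
    refine Finset.sum_congr rfl fun i _ => ?_
    rw [← mul_assoc, ← AddChar.map_add_eq_mul, add_sub_cancel, hφ, AddChar.zmodChar_apply']
    push_cast; ring
  rw [← h2]
  refine IsIntegral.mul ?_ (h1.add isIntegral_one)
  rw [hφ, AddChar.zmodChar_apply']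
  exact (IsIntegral.of_pow (NeZero.pos N) (hω ▸ isIntegral_one)).pow m

lemma false_of_coprime (L d : ℕ) (hL : 3 ≤ L) (hd : 2 ≤ d) (hc : L.Coprime d) (ω : ℂ)
    (hω : IsPrimitiveRoot ω d)
    (h : IsIntegral ℤ (2 / (L : ℂ) * ∑ k ∈ Finset.range L, ω ^ k)) : False := by
  have hi : IsIntegral ℤ ω := hω.isIntegral (by omega)
  have hL0 : (L : ℂ) ≠ 0 := by exact_mod_cast (by omega : L ≠ 0)
  obtain ⟨t, ht⟩ := exists_pow_eq_self_of_coprime (x := ω) (n := L) (hω.eq_orderOf ▸ hc)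
  have hne : ω - 1 ≠ 0 := sub_ne_zero.mpr (hω.ne_one (by omega))
  have h1 : (∑ k ∈ Finset.range L, ω ^ k) * (∑ k ∈ Finset.range t, (ω ^ L) ^ k) = 1 := by
    apply mul_right_cancel₀ hne
    rw [mul_right_comm, geom_sum_mul, mul_comm, geom_sum_mul, ht, one_mul]
  have h2 : IsIntegral ℤ (((2 : ℕ) : ℂ) / (L : ℂ)) := by
    have := h.mul (IsIntegral.sum (s := Finset.range t)
      (fun k => (ω ^ L) ^ k) fun k _ => (hi.pow L).pow k)
    rw [mul_assoc, h1] at this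
    simpa using this
  have := Nat.le_of_dvd (by norm_num) (dvd_of_isIntegral_div 2 L (by omega) h2)
  omega

lemma false_of_sq (L : ℕ) (hL : 3 ≤ L) (hp : L.Prime) (ω : ℂ)
    (hω : IsPrimitiveRoot ω (L * L))
    (h : IsIntegral ℤ (2 / (L : ℂ) * ∑ k ∈ Finset.range L, ω ^ k)) : False := by
  have hi : IsIntegral ℤ ω := hω.isIntegral (by positivity)
  have hL0 : (L : ℂ) ≠ 0 := by exact_mod_cast (by omega : L ≠ 0)
  have hη : IsPrimitiveRoot (ω ^ L) L := hω.pow (by positivity) rfl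
  obtain ⟨z, hz, hzL⟩ := hη.self_sub_one_pow_dvd_order (k := 2) (by omega)
  have hzi : IsIntegral ℤ z := by
    refine Algebra.adjoin_le (S := integralClosure ℤ ℂ) ?_ hz
    exact Set.singleton_subset_iff.mpr (hi.pow L)
  have h1 := ((h.mul (hi.sub isIntegral_one)).pow 2).mul hzi
  rw [mul_assoc, geom_sum_mul, mul_pow, mul_assoc, mul_comm _ z, ← hzL] at h1
  have h2 : IsIntegral ℤ (((4 : ℕ) : ℂ) / (L : ℂ)) := by
    have h4 : (2 / (L : ℂ)) ^ 2 * (L : ℂ) = ((4 : ℕ) : ℂ) / (L : ℂ) := by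
      push_cast
      field_simp; norm_num
    rw [← h4]
    exact h1
  have h3 : L ∣ 2 ^ 2 := dvd_of_isIntegral_div 4 L (by omega) h2
  have := Nat.le_of_dvd (by norm_num) (hp.dvd_of_dvd_pow h3)
  omega

/-- For prime `L = 2m+1 ≥ 3` and `N ≥ 2` with `N ≠ L`, the F-type Grover walk
on the cycle with `N` vertices has infinite period: `U^n ≠ I` for all `n ≥ 1`. -/
theorem stmt4 (m N : ℕ) [NeZero N] (hm : 1 ≤ m) (hp : Nat.Prime (2*m+1))
    (hN : 2 ≤ N) (hNL : N ≠ 2*m+1) :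
    ∀ n : ℕ, 1 ≤ n → (walkU m N (coinF m)) ^ n ≠ 1 := by
  intro n hn h
  have key := key_integral m N n hn h
  have cop : ∀ d : ℕ, 2 ≤ d → d ∣ N → (2*m+1) ∣ d := by
    intro d hd hdN
    by_contra hnd
    have hω := Complex.isPrimitiveRoot_exp d (by omega)
    exact false_of_coprime (2*m+1) d (by omega) hd ((Nat.Prime.coprime_iff_not_dvd hp).mpr hnd) _ hω
      (key _ ((hω.pow_eq_one_iff_dvd N).mpr hdN))
  obtain ⟨M, hM⟩ := cop N hN dvd_rfl
  have hM2 : 2 ≤ M := by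
    rcases M with _ | _ | M
    · omega
    · omega
    · omega
  obtain ⟨K, hK⟩ := cop M hM2 ⟨2*m+1, by rw [hM, mul_comm]⟩
  have hω := Complex.isPrimitiveRoot_exp ((2*m+1) * (2*m+1)) (by positivity)
  exact false_of_sq (2*m+1) (by omega) hp _ hω
    (key _ ((hω.pow_eq_one_iff_dvd N).mpr ⟨K, by rw [hM, hK, mul_assoc]⟩))
end

section
/- Let L = 2m+1 ≥ 3 be an odd integer and let N ≥ 2 be an integer admitting a divisor d ≥ 2 with gcd(d, L) = 1. Then the L-state F-type Grover walk on the cycle with N vertices has infinite period; that is, (U^{F,L}_N)^n ≠ I for every integer n ≥ 1. -/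
open Matrix Polynomial

lemma aux_trace_integral_s5 {k : ℕ} (M : Matrix (Fin k) (Fin k) ℂ) (n : ℕ) (hn : 1 ≤ n)
    (h : M ^ n = 1) : IsIntegral ℤ M.trace := by
  rw [Matrix.trace_eq_sum_roots_charpoly]
  apply IsIntegral.multiset_sum
  intro x hx
  have hxs : x ∈ spectrum ℂ M := by
    rw [Matrix.mem_spectrum_iff_isRoot_charpoly]
    exact Polynomial.isRoot_of_mem_roots hx
  have h2 : x ^ n ∈ spectrum ℂ (M ^ n) := spectrum.pow_mem_pow M n hxs
  have h3 : x ^ n = 1 := by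
    rw [h] at h2
    by_contra hne
    rw [spectrum.mem_iff, ← (algebraMap ℂ (Matrix (Fin k) (Fin k) ℂ)).map_one, ← map_sub] at h2
    exact h2 ((IsUnit.mk0 _ (sub_ne_zero.mpr hne)).map _)
  apply IsIntegral.of_pow hn
  rw [h3]; exact isIntegral_one

lemma aux_reduce (m N : ℕ) [NeZero N] (A : Matrix (Fin (2*m+1)) (Fin (2*m+1)) ℂ)
    (χ : AddChar (ZMod N) ℂ) (n : ℕ) (h : (walkU m N A) ^ n = 1) :
    (Matrix.of fun i j : Fin (2*m+1) => χ ((m : ZMod N) - ((i : ℕ) : ZMod N)) * A i j) ^ n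
      = 1 := by
  set M : Matrix (Fin (2*m+1)) (Fin (2*m+1)) ℂ :=
    Matrix.of fun i j => χ ((m : ZMod N) - ((i : ℕ) : ZMod N)) * A i j with hM
  let E : Matrix ((ZMod N) × Fin (2*m+1)) (Fin (2*m+1)) ℂ :=
    Matrix.of fun p j => if p.2 = j then χ p.1 else 0
  have hUE : walkU m N A * E = E * M := by
    ext ⟨v, i⟩ j
    simp only [Matrix.mul_apply, Fintype.sum_prod_type, walkU, E, hM, Matrix.of_apply]
    simp only [mul_ite, mul_zero, Finset.sum_ite_eq', Finset.mem_univ, if_true, ite_mul,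
      zero_mul, Finset.sum_ite_eq]
    have : ∀ w : ZMod N, (v = w + ((i:ℕ) : ZMod N) - (m : ZMod N)) ↔
        w = v + ((m : ZMod N) - ((i:ℕ) : ZMod N)) := by
      intro w
      constructor
      · rintro rfl; ring
      · rintro rfl; ring
    simp only [this, Finset.sum_ite_eq', Finset.mem_univ, if_true, AddChar.map_add_eq_mul]
    ring
  have hpow : ∀ k : ℕ, walkU m N A ^ k * E = E * M ^ k := by
    intro k
    induction k with
    | zero => simp
    | succ k ih => rw [pow_succ, Matrix.mul_assoc, hUE, ← Matrix.mul_assoc, ih,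
        Matrix.mul_assoc, ← pow_succ]
  have h1 := hpow n
  rw [h, Matrix.one_mul] at h1
  ext i j
  have h2 := congrFun (congrFun h1 (0, i)) j
  simp [Matrix.mul_apply, E] at h2
  rw [← h2, Matrix.one_apply]

theorem stmt5 (m N d : ℕ) [NeZero N] (hm : 1 ≤ m) (hN : 2 ≤ N)
    (hd : d ∣ N) (hd2 : 2 ≤ d) (hcop : Nat.gcd d (2*m+1) = 1) :
    ∀ n : ℕ, 1 ≤ n → (walkU m N (coinF m)) ^ n ≠ 1 := by
  intro n hn h
  have hω := Complex.isPrimitiveRoot_exp d (by omega)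
  set ω := Complex.exp (2 * Real.pi * Complex.I / d) with hωdef
  have hωN : ω ^ N = 1 := (hω.pow_eq_one_iff_dvd N).mpr hd
  have hω1 : ω ≠ 1 := hω.ne_one (by omega)
  let χ : AddChar (ZMod N) ℂ := (AddChar.zmodChar N hωN)⁻¹
  have hχi : ∀ i : ℕ, χ ((m : ZMod N) - (i : ZMod N)) = χ (m : ZMod N) * ω ^ i := by
    intro i
    rw [sub_eq_add_neg, AddChar.map_add_eq_mul]
    congr 1
    simp only [χ, AddChar.inv_apply, neg_neg]
    exact AddChar.zmodChar_apply' hωN i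
  have hχm : χ (m : ZMod N) * ω ^ m = 1 := by
    rw [← hχi, sub_self, AddChar.map_zero_eq_one]
  have hint := aux_trace_integral_s5 _ n hn (aux_reduce m N (coinF m) χ n h)
  have hL : (2 * (m:ℂ) + 1) ≠ 0 := by exact_mod_cast Nat.succ_ne_zero (2*m)
  have htr : (Matrix.of fun i j : Fin (2*m+1) =>
      χ ((m : ZMod N) - ((i : ℕ) : ZMod N)) * coinF m i j).trace
      = χ (m : ZMod N) * (2 / (2 * (m:ℂ) + 1)) * (∑ i ∈ Finset.range (2*m+1), ω ^ i) - 1 := by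
    have : ∀ i : Fin (2*m+1), χ ((m : ZMod N) - ((i : ℕ) : ZMod N)) * coinF m i i
        = χ (m : ZMod N) * (2 / (2 * (m:ℂ) + 1)) * ω ^ (i:ℕ) -
          (if (i:ℕ) = m then 1 else 0) := by
      intro i
      rw [hχi]
      unfold coinF
      by_cases hi : (i:ℕ) = m
      · rw [if_pos (by omega), if_pos hi, hi]
        have : (1 - 2 * (m:ℂ)) / (2 * (m:ℂ) + 1) = 2 / (2 * (m:ℂ) + 1) - 1 := by
          field_simp; ring
        rw [this]
        linear_combination (-1 : ℂ) * hχm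
      · rw [if_neg (by omega), if_neg hi]; ring
    simp only [Matrix.trace, Matrix.diag, Matrix.of_apply, this]
    rw [Finset.sum_sub_distrib, ← Finset.mul_sum,
      Fin.sum_univ_eq_sum_range (fun i => ω ^ i) (2*m+1),
      Fin.sum_univ_eq_sum_range (fun i => if i = m then (1:ℂ) else 0) (2*m+1)]
    rw [Finset.sum_ite_eq', if_pos (Finset.mem_range.mpr (by omega))]
  rw [htr] at hint
  have hint1 := hint.add isIntegral_one
  rw [sub_add_cancel] at hint1
  have hωint : IsIntegral ℤ ω := hω.isIntegral (by omega)
  obtain ⟨a, -, ha⟩ := Nat.exists_mul_mod_eq_one_of_coprime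
    (show Nat.Coprime (2*m+1) d from (Nat.Coprime.symm hcop)) (by omega)
  have hωa : ω ^ ((2*m+1) * a) = ω := by
    rw [← Nat.div_add_mod ((2*m+1) * a) d, ha, pow_add, pow_mul, hω.pow_eq_one]; simp
  set T := ∑ i ∈ Finset.range (2*m+1), ω ^ i with hT
  set S := ∑ i ∈ Finset.range a, (ω ^ (2*m+1)) ^ i with hS
  have hTT : T * S = 1 := by
    have e1 : T * (ω - 1) = ω ^ (2*m+1) - 1 := geom_sum_mul ω _
    have e2 : S * (ω ^ (2*m+1) - 1) = (ω ^ (2*m+1)) ^ a - 1 := geom_sum_mul _ _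
    rw [← pow_mul, hωa] at e2
    apply mul_right_cancel₀ (sub_ne_zero.mpr hω1)
    linear_combination S * e1 + e2
  have hSint : IsIntegral ℤ S := IsIntegral.sum _ fun i _ => (hωint.pow _).pow _
  have h2 := (hint1.mul hSint).mul (hωint.pow m)
  have h3 : χ (m : ZMod N) * (2 / (2 * (m:ℂ) + 1)) * T * S * ω ^ m
      = algebraMap ℚ ℂ (2 / (2 * (m:ℚ) + 1)) := by
    have : algebraMap ℚ ℂ (2 / (2 * (m:ℚ) + 1)) = 2 / (2 * (m:ℂ) + 1) := by
      simp
    rw [this]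
    linear_combination (2 / (2 * (m:ℂ) + 1)) * (T * S * hχm + hTT)
  rw [h3, isIntegral_algebraMap_iff (algebraMap ℚ ℂ).injective] at h2
  obtain ⟨z, hz⟩ := IsIntegrallyClosed.isIntegral_iff.mp h2
  have hLQ : (2 * (m:ℚ) + 1) ≠ 0 := by positivity
  rw [eq_div_iff hLQ] at hz
  have hzz : z * (2 * (m:ℤ) + 1) = 2 := by
    have : (z:ℚ) * (2 * (m:ℚ) + 1) = 2 := by simpa using hz
    exact_mod_cast this
  have hmz : (1:ℤ) ≤ m := by exact_mod_cast hm
  rcases le_or_gt z 0 with hz0 | hz0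
  · nlinarith
  · nlinarith
end

section
/- Let L = 2m+1 ≥ 3 be an odd integer and let N₁, N₂ ≥ 2 with N₁ ∣ N₂. Then f^{M,L}_{N₁}(x) divides f^{M,L}_{N₂}(x) in the ring of polynomials over ℂ. -/
open Matrix Polynomial

/-- For odd `L = 2m+1 ≥ 3` and `N₁ ∣ N₂` (both `≥ 2`),
`f^{M,L}_{N₁}(x)` divides `f^{M,L}_{N₂}(x)` in `ℂ[X]`. -/
theorem stmt8 (m N₁ N₂ : ℕ) (hm : 1 ≤ m) (hN₁ : 2 ≤ N₁) (hN₂ : 2 ≤ N₂)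
    (hdvd : N₁ ∣ N₂) :
    fM m N₁ ∣ fM m N₂ := by
  obtain ⟨d, rfl⟩ := hdvd
  have hd : d ≠ 0 := by
    rintro rfl
    omega
  have hz : zetaN (N₁ * d) ^ d = zetaN N₁ := by
    unfold zetaN
    rw [← Complex.exp_nat_mul]
    congr 1
    have h1 : (N₁ : ℂ) ≠ 0 := by
      exact_mod_cast (by omega : N₁ ≠ 0)
    have h2 : (d : ℂ) ≠ 0 := by
      exact_mod_cast hd
    push_cast
    field_simp
  have hf : ∀ k : ℕ, fMk m N₁ (k : ℤ) = fMk m (N₁ * d) ((d * k : ℕ) : ℤ) := by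
    intro k
    have hZ : ZmatPow N₁ m (k : ℤ) = ZmatPow (N₁ * d) m ((d * k : ℕ) : ℤ) := by
      unfold ZmatPow
      congr 1
      funext i
      rw [← hz, ← _root_.zpow_natCast, ← _root_.zpow_mul]
      congr 1
      push_cast
      ring
    unfold fMk
    rw [hZ]
  unfold fM
  rw [Finset.prod_congr rfl (fun k _ => hf k)]
  have hinj : Set.InjOn (fun k : ℕ => d * k) (Finset.range N₁ : Set ℕ) := by
    intro a _ b _ hab
    exact Nat.eq_of_mul_eq_mul_left (Nat.pos_of_ne_zero hd) hab
  rw [← Finset.prod_image (f := fun j : ℕ => fMk m (N₁ * d) (j : ℤ)) hinj]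
  apply Finset.prod_dvd_prod_of_subset
  intro j hj
  rw [Finset.mem_image] at hj
  obtain ⟨k, hk, rfl⟩ := hj
  rw [Finset.mem_range] at hk ⊢
  rw [mul_comm N₁ d]
  exact Nat.mul_lt_mul_of_pos_left hk (Nat.pos_of_ne_zero hd)
end

section
/- Let L = 2m+1 ≥ 3 be an odd integer, N ≥ 2, and k an integer. Then f^{M,L}_{N,k}(x) = det(x·I_L − Z^k A^{M,L}) is a monic polynomial of degree L over ℂ whose constant coefficient equals −1 and whose coefficient of x equals −((2m−1)/L)·Σ_{j=−m}^{m} ζ_N^{jk}. Moreover, there exist integers a_j (for −(2m−1) ≤ j ≤ 2m−1) and b_j (for −(3m−3) ≤ j ≤ 3m−3), depending only on L (not on N or k), such that the coefficient of x² equals −((2m−3)/L)·Σ_{|j|≤2m−1} a_j ζ_N^{jk} and the coefficient of x³ equals −((2m−5)/L)·Σ_{|j|≤3m−3} b_j ζ_N^{jk}. -/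
open Matrix Polynomial

lemma charpoly_formula (m : ℕ) (d : Fin (2*m+1) → ℂ) :
    (Matrix.diagonal d * coinM m).charpoly =
      - (∏ i, (X + C (d i))) +
        C (2 / (2*(m:ℂ)+1)) * (X * derivative (∏ i, (X + C (d i)))) := by
  have hL : (2*(m:ℂ)+1) ≠ 0 := by exact_mod_cast Nat.succ_ne_zero (2*m)
  apply Polynomial.eq_of_infinite_eval_eq
  refine Set.Infinite.mono (s := (Set.range fun i => - d i)ᶜ) ?_
    (Set.Finite.infinite_compl (Set.finite_range _))
  intro x hx
  have hw : ∀ i, x + d i ≠ 0 := fun i h => hx ⟨i, by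
    show - d i = x
    linear_combination -h⟩
  show eval x _ = eval x _
  rw [Matrix.eval_charpoly]
  have hM : Matrix.scalar _ x - Matrix.diagonal d * coinM m =
      Matrix.diagonal (fun i => x + d i) *
        (1 + replicateCol Unit (fun i => -(2 / (2*(m:ℂ)+1)) * (d i / (x + d i))) *
          replicateRow Unit (fun _ => (1:ℂ))) := by
    ext i j
    have h := hw i
    rw [Matrix.sub_apply, Matrix.diagonal_mul, Matrix.diagonal_mul]
    by_cases hij : i = j
    · subst hij
      simp [coinM, Matrix.mul_apply]
      field_simp
      ring
    · simp [coinM, Matrix.mul_apply, hij]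
      field_simp
  rw [hM, Matrix.det_mul, Matrix.det_diagonal, Matrix.det_one_add_replicateCol_mul_replicateRow,
    derivative_prod_finset]
  have h1 : ∀ a, ∏ b ∈ Finset.univ.erase a, (x + d b) = (∏ b, (x + d b)) * (x + d a)⁻¹ := by
    intro a
    rw [← Finset.mul_prod_erase Finset.univ _ (Finset.mem_univ a)]
    have := hw a
    field_simp
  have h2 : ∀ a, d a / (x + d a) = 1 - x * (x + d a)⁻¹ := by
    intro a
    have := hw a
    field_simp
    ring
  simp only [dotProduct, one_mul, ← Finset.mul_sum, h2, Finset.sum_sub_distrib,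
    eval_add, eval_neg, eval_mul, eval_C, eval_X, eval_prod, eval_finsetSum, derivative_add,
    derivative_X, derivative_C, eval_one, eval_zero, add_zero, mul_one, h1]
  simp only [Finset.sum_const, Finset.card_univ, Fintype.card_fin, nsmul_eq_mul]
  push_cast
  field_simp
  ring

/-- exponent associated with a set of indices -/
def expo (m : ℕ) (t : Finset (Fin (2*m+1))) : ℤ := ∑ i ∈ t, (((i : ℕ) : ℤ) - m)

lemma expo_univ (m : ℕ) : expo m Finset.univ = 0 := by
  unfold expo
  rw [Fin.sum_univ_eq_sum_range (fun i => ((i : ℕ) : ℤ) - m) (2*m+1)]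
  have h : ∀ n : ℕ, 2 * ∑ i ∈ Finset.range n, (((i : ℕ) : ℤ) - m) = n * (n - 1 - 2 * m) := by
    intro n
    induction n with
    | zero => simp
    | succ n ih => rw [Finset.sum_range_succ, mul_add, ih]; push_cast; ring
  have := h (2*m+1)
  push_cast at this ⊢
  linarith

lemma zetaN_ne (N : ℕ) : zetaN N ≠ 0 := Complex.exp_ne_zero _

lemma zpow_sum' {ι : Type*} (z : ℂ) (hz : z ≠ 0) (s : Finset ι) (f : ι → ℤ) :
    ∏ i ∈ s, z ^ f i = z ^ ∑ i ∈ s, f i := by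
  classical
  induction s using Finset.induction_on with
  | empty => simp
  | insert a s ha ih => rw [Finset.prod_insert ha, Finset.sum_insert ha, zpow_add₀ hz, ih]

lemma prod_coeff (m N : ℕ) (k : ℤ) (r : ℕ) (hr : r ≤ 2*m+1) :
    (∏ i : Fin (2*m+1), (X + C (zetaN N ^ ((((m : ℤ) - ((i : ℕ) : ℤ))) * k)))).coeff r =
      ∑ t ∈ (Finset.univ : Finset (Fin (2*m+1))).powersetCard r, zetaN N ^ (expo m t * k) := by
  rw [Finset.prod_X_add_C_coeff _ _ (by simpa using hr)]
  refine Finset.sum_nbij' (fun t => tᶜ) (fun t => tᶜ) ?_ ?_ ?_ ?_ ?_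
  · intro t ht
    simp [Finset.mem_powersetCard, Finset.card_compl] at ht ⊢
    omega
  · intro t ht
    simp [Finset.mem_powersetCard, Finset.card_compl] at ht ⊢
    omega
  · intro t _; simp
  · intro t _; simp
  · intro t _
    rw [zpow_sum' _ (zetaN_ne N)]
    congr 1
    have h := Finset.sum_add_sum_compl t (fun i : Fin (2*m+1) => ((i : ℕ) : ℤ) - m)
    have h0 := expo_univ m
    unfold expo at h0 ⊢
    rw [h0] at h
    rw [← Finset.sum_mul, eq_neg_of_add_eq_zero_right h, ← Finset.sum_neg_distrib]
    congr 1
    exact Finset.sum_congr rfl fun i _ => by ring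

lemma fMk_coeff (m N : ℕ) (k : ℤ) (r : ℕ) (hr : r ≤ 2*m+1) :
    (fMk m N k).coeff r = -((2*(m:ℂ)-(2*r-1))/(2*(m:ℂ)+1)) *
      ∑ t ∈ (Finset.univ : Finset (Fin (2*m+1))).powersetCard r, zetaN N ^ (expo m t * k) := by
  have hL : (2*(m:ℂ)+1) ≠ 0 := by exact_mod_cast Nat.succ_ne_zero (2*m)
  rw [fMk, ZmatPow, charpoly_formula, coeff_add, coeff_neg, coeff_C_mul, ← prod_coeff m N k r hr]
  rcases r with _ | r
  · simp
    field_simp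
  · rw [coeff_X_mul, coeff_derivative]
    push_cast
    field_simp
    ring

lemma fiber_sum (m N : ℕ) (k : ℤ) (r : ℕ) (s : Finset ℤ)
    (hs : ∀ t ∈ (Finset.univ : Finset (Fin (2*m+1))).powersetCard r, expo m t ∈ s) :
    ∑ t ∈ (Finset.univ : Finset (Fin (2*m+1))).powersetCard r, zetaN N ^ (expo m t * k) =
    ∑ j ∈ s, (((((Finset.univ : Finset (Fin (2*m+1))).powersetCard r).filter
      (fun t => expo m t = j)).card : ℤ) : ℂ) * zetaN N ^ (j * k) := by
  rw [← Finset.sum_fiberwise_of_maps_to' hs (fun j => zetaN N ^ (j * k))]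
  refine Finset.sum_congr rfl fun j _ => ?_
  simp [Finset.sum_const]

/-- For odd `L = 2m+1 ≥ 3`, every `f^{M,L}_{N,k}` is monic of degree `L` with
constant coefficient `−1` and coefficient of `x` equal to
`−((2m−1)/L)·Σ_{j=−m}^{m} ζ_N^{jk}`; moreover there are integers `a_j` (`|j| ≤ 2m−1`)
and `b_j` (`|j| ≤ 3m−3`) depending only on `L` such that the coefficients of `x²` and `x³`
are `−((2m−3)/L)·Σ a_j ζ_N^{jk}` and `−((2m−5)/L)·Σ b_j ζ_N^{jk}` respectively. -/
theorem stmt9 (m : ℕ) (hm : 1 ≤ m) :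
    ∃ a b : ℤ → ℤ, ∀ N : ℕ, 2 ≤ N → ∀ k : ℤ,
      (fMk m N k).Monic ∧ (fMk m N k).natDegree = 2*m+1 ∧
      (fMk m N k).coeff 0 = -1 ∧
      (fMk m N k).coeff 1 =
        -((2*(m:ℂ)-1)/(2*(m:ℂ)+1)) * ∑ j ∈ Finset.Icc (-(m:ℤ)) (m:ℤ), zetaN N ^ (j*k) ∧
      (fMk m N k).coeff 2 =
        -((2*(m:ℂ)-3)/(2*(m:ℂ)+1)) *
          ∑ j ∈ Finset.Icc (-(2*(m:ℤ)-1)) (2*(m:ℤ)-1), (a j : ℂ) * zetaN N ^ (j*k) ∧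
      (fMk m N k).coeff 3 =
        -((2*(m:ℂ)-5)/(2*(m:ℂ)+1)) *
          ∑ j ∈ Finset.Icc (-(3*(m:ℤ)-3)) (3*(m:ℤ)-3), (b j : ℂ) * zetaN N ^ (j*k) := by
  classical
  refine ⟨fun j => (((Finset.univ : Finset (Fin (2*m+1))).powersetCard 2).filter
      (fun t => expo m t = j)).card, fun j => (((Finset.univ : Finset (Fin (2*m+1))).powersetCard 3).filter
      (fun t => expo m t = j)).card, fun N _ k => ⟨?_, ?_, ?_, ?_, ?_, ?_⟩⟩
  · exact Matrix.charpoly_monic _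
  · simp [fMk, Matrix.charpoly_natDegree_eq_dim]
  · have hL : (2*(m:ℂ)+1) ≠ 0 := by exact_mod_cast Nat.succ_ne_zero (2*m)
    rw [fMk_coeff m N k 0 (by omega)]
    simp [expo]
    field_simp
    exact hL
  · rw [fMk_coeff m N k 1 (by omega), Finset.powersetCard_one, Finset.sum_map]
    congr 1
    · push_cast; ring
    · refine Finset.sum_bij (fun i _ => ((i : ℕ) : ℤ) - m) ?_ ?_ ?_ ?_
      · intro i _
        have := i.isLt
        rw [Finset.mem_Icc]
        omega
      · intro i _ j _ h
        ext
        omega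
      · intro j hj
        rw [Finset.mem_Icc] at hj
        exact ⟨⟨(j + m).toNat, by omega⟩, Finset.mem_univ _, by
          show (((j + m).toNat : ℕ) : ℤ) - m = j
          omega⟩
      · intro i _
        simp [expo]
  · rw [fMk_coeff m N k 2 (by omega), fiber_sum m N k 2 (Finset.Icc (-(2*(m:ℤ)-1)) (2*(m:ℤ)-1))]
    · congr 1
      push_cast; ring
    · intro t ht
      obtain ⟨i, j, hij, rfl⟩ := Finset.card_eq_two.mp (Finset.mem_powersetCard.mp ht).2
      have hij' : (i : ℕ) ≠ j := fun h => hij (Fin.ext h)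
      have := i.isLt
      have := j.isLt
      rw [Finset.mem_Icc, expo, Finset.sum_pair hij]
      omega
  · rw [fMk_coeff m N k 3 (by omega), fiber_sum m N k 3 (Finset.Icc (-(3*(m:ℤ)-3)) (3*(m:ℤ)-3))]
    · congr 1
      push_cast; ring
    · intro t ht
      obtain ⟨i, j, l, hij, hil, hjl, rfl⟩ :=
        Finset.card_eq_three.mp (Finset.mem_powersetCard.mp ht).2
      have hij' : (i : ℕ) ≠ j := fun h => hij (Fin.ext h)
      have hil' : (i : ℕ) ≠ l := fun h => hil (Fin.ext h)
      have hjl' : (j : ℕ) ≠ l := fun h => hjl (Fin.ext h)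
      have := i.isLt
      have := j.isLt
      have := l.isLt
      rw [Finset.mem_Icc, expo, Finset.sum_insert (by simp [hij, hil]), Finset.sum_pair hjl]
      omega
end

section
/- Let L = 2m+1 ≥ 3 be an odd prime. Then the polynomial f^{M,L}_{L²}(x) does not have all integer coefficients; that is, some coefficient of f^{M,L}_{L²} (in particular its coefficient of x³) is not an integer. -/
open Matrix Polynomial

/-- Determinant of diagonal plus rank one. -/
lemma aux_det {n : ℕ} (d u : Fin n → ℂ) (c : ℂ) (hd : ∀ i, d i ≠ 0) :
    (Matrix.diagonal d - Matrix.of (fun i _ => c * u i) : Matrix (Fin n) (Fin n) ℂ).det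
      = (∏ i, d i) * (1 - c * ∑ i, u i / d i) := by
  have h1 : (Matrix.diagonal d - Matrix.of (fun i _ => c * u i) : Matrix (Fin n) (Fin n) ℂ)
      = Matrix.diagonal d * (1 + replicateCol Unit (fun i => - (c * (u i / d i))) *
          replicateRow Unit (fun _ => (1:ℂ))) := by
    ext i j
    simp [Matrix.diagonal_mul, Matrix.mul_apply, Matrix.one_apply, Matrix.diagonal_apply]
    have := hd i
    split_ifs <;> field_simp <;> ring
  rw [h1, Matrix.det_mul, Matrix.det_diagonal, Matrix.det_one_add_replicateCol_mul_replicateRow]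
  simp [dotProduct, Finset.mul_sum, sub_eq_add_neg]

/-- The polynomial with roots `-w_i`. -/
noncomputable def auxE {n : ℕ} (w : Fin n → ℂ) : ℂ[X] := ∏ i, (X + C (w i))

lemma auxE_deriv {n : ℕ} (w : Fin n → ℂ) (x : ℂ) (hx : ∀ i, x + w i ≠ 0) :
    (derivative (auxE w)).eval x = (∏ i, (x + w i)) * ∑ i, 1 / (x + w i) := by
  rw [auxE, derivative_prod_finset, eval_finsetSum, Finset.mul_sum]
  refine Finset.sum_congr rfl fun i _ => ?_
  rw [← Finset.mul_prod_erase Finset.univ (fun i => x + w i) (Finset.mem_univ i)]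
  have := hx i
  simp [eval_prod]
  field_simp

lemma aux_charpoly (m : ℕ) (w : Fin (2*m+1) → ℂ) :
    (Matrix.diagonal w * coinM m).charpoly
      = - auxE w + C (2 / (2*(m:ℂ)+1)) * (X * derivative (auxE w)) := by
  have hL : (2*(m:ℂ)+1) ≠ 0 := by exact_mod_cast Nat.succ_ne_zero (2*m)
  apply Polynomial.eq_of_infinite_eval_eq
  refine Set.Infinite.mono (s := (Set.range (fun i => - w i))ᶜ) ?_ 
    (Set.Finite.infinite_compl (Set.finite_range _))
  intro x hx
  have hx' : ∀ i, x + w i ≠ 0 := by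
    intro i h
    exact hx ⟨i, by simp; linear_combination -h⟩
  have h1 : (Matrix.scalar (Fin (2*m+1)) x - Matrix.diagonal w * coinM m)
      = Matrix.diagonal (fun i => x + w i) - Matrix.of (fun i _ => (2 / (2*(m:ℂ)+1)) * w i) := by
    ext i j
    simp only [Matrix.sub_apply, Matrix.scalar_apply, Matrix.diagonal_mul, Matrix.diagonal_apply,
      coinM, Matrix.of_apply]
    split_ifs
    · field_simp
      ring
    · ring
  simp only [Set.mem_ofPred_eq, Matrix.eval_charpoly]
  rw [h1, aux_det _ _ _ hx']
  simp only [eval_add, eval_neg, eval_mul, eval_C, eval_X, auxE_deriv w x hx']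
  have h2 : ∑ i, w i / (x + w i) = (2*(m:ℂ)+1) - x * ∑ i, 1 / (x + w i) := by
    have : ∀ i, w i / (x + w i) = 1 - x * (1 / (x + w i)) := by
      intro i
      have := hx' i
      field_simp
      ring
    simp only [this, Finset.sum_sub_distrib, ← Finset.mul_sum]
    simp
  rw [h2]
  simp only [auxE, eval_prod, eval_add, eval_X, eval_C]
  field_simp
  ring

lemma aux_coeff (m : ℕ) (w : Fin (2*m+1) → ℂ) (r : ℕ) :
    (Matrix.diagonal w * coinM m).charpoly.coeff r
      = (2 * r / (2*(m:ℂ)+1) - 1) * (auxE w).coeff r := by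
  rw [aux_charpoly]
  cases r with
  | zero => simp
  | succ r =>
    simp [coeff_X_mul, coeff_derivative]
    ring

/-- Newton-type identities for the low coefficients of a product. -/
lemma aux_newton (s : Finset ℕ) (g : ℕ → ℂ[X]) (h0 : ∀ k, (g k).coeff 0 = 1) :
    (∏ k ∈ s, g k).coeff 0 = 1 ∧
    (∏ k ∈ s, g k).coeff 1 = ∑ k ∈ s, (g k).coeff 1 ∧
    2 * (∏ k ∈ s, g k).coeff 2 = (∑ k ∈ s, (g k).coeff 1)^2 - ∑ k ∈ s, (g k).coeff 1 ^ 2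
      + 2 * ∑ k ∈ s, (g k).coeff 2 ∧
    6 * (∏ k ∈ s, g k).coeff 3 = (∑ k ∈ s, (g k).coeff 1)^3
      - 3 * (∑ k ∈ s, (g k).coeff 1) * (∑ k ∈ s, (g k).coeff 1 ^ 2)
      + 2 * ∑ k ∈ s, (g k).coeff 1 ^ 3
      + 6 * (∑ k ∈ s, (g k).coeff 1) * (∑ k ∈ s, (g k).coeff 2)
      - 6 * (∑ k ∈ s, (g k).coeff 1 * (g k).coeff 2)
      + 6 * ∑ k ∈ s, (g k).coeff 3 := by
  classical
  induction s using Finset.induction_on with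
  | empty => simp [coeff_one]
  | insert a s ha ih =>
    obtain ⟨i0, i1, i2, i3⟩ := ih
    simp only [Finset.prod_insert ha, Finset.sum_insert ha]
    simp only [coeff_mul, Finset.Nat.antidiagonal_succ, Finset.Nat.antidiagonal_zero,
      Finset.sum_cons, Finset.map_singleton, Finset.sum_singleton, Finset.sum_map,
      Finset.map_cons, h0, i0, i1]
    simp [h0, i0, i1]
    refine ⟨by ring, ?_, ?_⟩
    · linear_combination i2
    · linear_combination i3 + 3 * (g a).coeff 1 * i2

lemma aux_orth {N : ℕ} {ζ : ℂ} (hζ : IsPrimitiveRoot ζ N) (j : ℤ) :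
    ∑ k ∈ Finset.range N, (ζ ^ j) ^ k = if (N:ℤ) ∣ j then (N:ℂ) else 0 := by
  split_ifs with h
  · simp [(hζ.zpow_eq_one_iff_dvd j).2 h]
  · have h1 : ζ ^ j ≠ 1 := fun h' => h ((hζ.zpow_eq_one_iff_dvd j).1 h')
    rw [geom_sum_eq h1, ← zpow_natCast, ← _root_.zpow_mul, mul_comm, _root_.zpow_mul, zpow_natCast,
      hζ.pow_eq_one]
    simp

lemma aux_int {N : ℕ} {ζ : ℂ} (hζ : IsPrimitiveRoot ζ N) (P : ℤ[X]) :
    ∃ z : ℤ, ∑ k ∈ Finset.range N, aeval (ζ ^ k) P = (N:ℂ) * z := by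
  induction P using Polynomial.induction_on' with
  | add p q hp hq =>
    obtain ⟨a, ha⟩ := hp
    obtain ⟨b, hb⟩ := hq
    exact ⟨a + b, by simp [Finset.sum_add_distrib, ha, hb, mul_add]⟩
  | monomial n a =>
    have h := aux_orth hζ (n:ℤ)
    have h2 : ∑ k ∈ Finset.range N, aeval (ζ ^ k) (monomial n a)
        = a * ∑ k ∈ Finset.range N, (ζ ^ (n:ℤ)) ^ k := by
      rw [Finset.mul_sum]
      refine Finset.sum_congr rfl fun k _ => ?_
      rw [aeval_monomial]
      simp [← pow_mul, mul_comm]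
    rw [h2, h]
    split_ifs
    · exact ⟨a, mul_comm _ _⟩
    · exact ⟨0, by simp⟩

/-- Universal polynomial. -/
noncomputable def auxG (N m : ℕ) : ℤ[X][X] :=
  ∏ i : Fin (2*m+1), (X + C (X ^ (m + (N-1) * (i:ℕ))))

/-- Diagonal entries of `Z^k`. -/
noncomputable def auxw (N m : ℕ) (k : ℕ) : Fin (2*m+1) → ℂ :=
  fun i => zetaN N ^ ((((m : ℤ) - ((i : ℕ) : ℤ))) * (k:ℤ))

lemma aux_prim (N : ℕ) (hN : N ≠ 0) : IsPrimitiveRoot (zetaN N) N :=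
  Complex.isPrimitiveRoot_exp N hN

lemma auxE_coeff (N m k r : ℕ) (hN : N ≠ 0) :
    (auxE (auxw N m k)).coeff r = aeval (zetaN N ^ k) ((auxG N m).coeff r) := by
  have h : auxE (auxw N m k) = (auxG N m).map (aeval (R := ℤ) (zetaN N ^ k)).toRingHom := by
    rw [auxE, auxG, Polynomial.map_prod]
    refine Finset.prod_congr rfl fun i _ => ?_
    have hz : zetaN N ≠ 0 := (aux_prim N hN).ne_zero hN
    have : auxw N m k i = (zetaN N ^ k) ^ (m + (N-1) * (i:ℕ)) := by
      obtain ⟨M, rfl⟩ := Nat.exists_eq_succ_of_ne_zero hN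
      have h1 := (aux_prim _ hN).pow_eq_one
      rw [auxw, ← pow_mul, ← zpow_natCast, ← one_mul (_ ^ ((m - (i:ℕ) : ℤ) * k)),
        ← one_pow (k * i), ← h1, ← pow_mul, ← zpow_natCast, ← zpow_add₀ hz]
      congr 1
      push_cast
      ring
    simp [this]
  rw [h, coeff_map]
  rfl

lemma aux_prodw (N m k : ℕ) (hN : N ≠ 0) : ∏ i, auxw N m k i = 1 := by
  have hz : zetaN N ≠ 0 := (aux_prim N hN).ne_zero hN
  have h2 : ∑ i : Fin (2*m+1), ((m:ℤ) - (i:ℕ)) = 0 := by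
    rw [Fin.sum_univ_eq_sum_range (fun i => (m:ℤ) - (i:ℕ))]
    have : ∀ n : ℕ, 2 * ∑ i ∈ Finset.range n, ((m:ℤ) - (i:ℕ)) = n * (2 * m + 1 - n) := by
      intro n
      induction n with
      | zero => simp
      | succ n ih => rw [Finset.sum_range_succ, mul_add, ih]; push_cast; ring
    have := this (2*m+1)
    push_cast at this
    simp at this
    simpa using this
  have h3 : ∀ (s : Finset (Fin (2*m+1))) , ∏ i ∈ s, auxw N m k i
      = zetaN N ^ ((∑ i ∈ s, ((m:ℤ) - ((i:ℕ):ℤ))) * (k:ℤ)) := by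
    intro s
    classical
    induction s using Finset.induction_on with
    | empty => simp
    | insert a s ha ih =>
      rw [Finset.prod_insert ha, ih, Finset.sum_insert ha, auxw, ← zpow_add₀ hz, add_mul]
  rw [h3, h2]
  simp

lemma auxE_coeff_zero (N m k : ℕ) (hN : N ≠ 0) : (auxE (auxw N m k)).coeff 0 = 1 := by
  rw [coeff_zero_eq_eval_zero, auxE, eval_prod]
  simpa using aux_prodw N m k hN

lemma auxE_coeff_one (N m k : ℕ) (hN : N ≠ 0) :
    (auxE (auxw N m k)).coeff 1 = ∑ i : Fin (2*m+1), (zetaN N ^ ((i:ℕ) - (m:ℤ))) ^ k := by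
  have hz : zetaN N ≠ 0 := (aux_prim N hN).ne_zero hN
  have h : (auxE (auxw N m k)).coeff 1 = (derivative (auxE (auxw N m k))).eval 0 := by
    rw [← coeff_zero_eq_eval_zero, coeff_derivative]
    simp
  rw [h, auxE_deriv]
  · simp only [zero_add]
    rw [aux_prodw N m k hN, one_mul]
    refine Finset.sum_congr rfl fun i _ => ?_
    rw [auxw, one_div, ← _root_.zpow_neg, ← zpow_natCast, ← _root_.zpow_mul]
    congr 1
    ring
  · intro i
    simp only [auxw, zero_add]
    exact zpow_ne_zero _ hz

/-- Number of zero-sum triples. -/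
def auxT (m : ℕ) : ℕ :=
  ∑ i ∈ Finset.range (2*m+1), ∑ j ∈ Finset.range (2*m+1), ∑ l ∈ Finset.range (2*m+1),
    if i + j + l = 3 * m then 1 else 0

lemma auxT_eq (m : ℕ) : 4 * auxT m = 3 * (2*m+1)^2 + 1 := by
  have h1 : ∀ i ∈ Finset.range (2*m+1), (∑ j ∈ Finset.range (2*m+1),
      ∑ l ∈ Finset.range (2*m+1), if i + j + l = 3 * m then 1 else 0)
      = if i ≤ m then m + i + 1 else 3 * m - i + 1 := by
    intro i hi
    rw [Finset.mem_range] at hi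
    have : ∀ j ∈ Finset.range (2*m+1), (∑ l ∈ Finset.range (2*m+1),
        if i + j + l = 3 * m then 1 else 0) = if m ≤ i + j ∧ i + j ≤ 3 * m then 1 else 0 := by
      intro j hj
      by_cases hc : m ≤ i + j ∧ i + j ≤ 3 * m
      · rw [if_pos hc, Finset.sum_eq_single_of_mem (3*m - i - j)]
        · rw [if_pos (by omega)]
        · rw [Finset.mem_range]; omega
        · intro b _ hb
          rw [if_neg (by omega)]
      · rw [if_neg hc]
        refine Finset.sum_eq_zero fun l hl => ?_
        rw [Finset.mem_range] at hl
        rw [if_neg (by omega)]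
    rw [Finset.sum_congr rfl this, ← Finset.card_filter]
    have : (Finset.range (2*m+1)).filter (fun j => m ≤ i + j ∧ i + j ≤ 3 * m)
        = Finset.Ico (m - i) (min (2*m+1) (3*m+1-i)) := by
      ext j
      simp only [Finset.mem_filter, Finset.mem_range, Finset.mem_Ico]
      omega
    rw [this, Nat.card_Ico]
    split_ifs <;> omega
  rw [auxT, Finset.sum_congr rfl h1, show 2*m+1 = (m+1) + m by ring, Finset.sum_range_add]
  have e1 : ∀ n ≤ m + 1, 2 * ∑ i ∈ Finset.range n, (if i ≤ m then m + i + 1 else 3 * m - i + 1)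
      = n * (2 * m + 1 + n) := by
    intro n
    induction n with
    | zero => simp
    | succ n ih =>
      intro hn
      rw [Finset.sum_range_succ, mul_add, ih (by omega), if_pos (by omega)]
      ring
  have e2 : ∀ n ≤ m, 2 * ∑ i ∈ Finset.range n,
      (if m + 1 + i ≤ m then m + (m + 1 + i) + 1 else 3 * m - (m + 1 + i) + 1) + n * n
      = n * (4 * m + 1) := by
    intro n
    induction n with
    | zero => simp
    | succ n ih =>
      intro hn
      have := ih (by omega)
      rw [Finset.sum_range_succ, mul_add, if_neg (by omega)]
      zify [show m + 1 + n ≤ 3 * m by omega] at this ⊢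
      linear_combination this
  have a1 := e1 (m+1) le_rfl
  have a2 := e2 m le_rfl
  linear_combination 2 * a1 + 2 * a2

lemma aux_cube (N m : ℕ) (hN : 3 * m < N) :
    ∑ k ∈ Finset.range N, (auxE (auxw N m k)).coeff 1 ^ 3 = (N:ℂ) * (auxT m : ℂ) := by
  have hN0 : N ≠ 0 := by omega
  have hp := aux_prim N hN0
  have hz : zetaN N ≠ 0 := hp.ne_zero hN0
  have h1 : ∀ k, (auxE (auxw N m k)).coeff 1 ^ 3 =
      ∑ i ∈ Finset.range (2*m+1), ∑ j ∈ Finset.range (2*m+1), ∑ l ∈ Finset.range (2*m+1),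
        (zetaN N ^ ((i:ℤ) + j + l - 3 * m)) ^ k := by
    intro k
    rw [auxE_coeff_one N m k hN0,
      Fin.sum_univ_eq_sum_range (fun i => (zetaN N ^ ((i:ℕ) - (m:ℤ))) ^ k), pow_succ, sq,
      Finset.sum_mul_sum, Finset.sum_mul]
    refine Finset.sum_congr rfl fun i _ => ?_
    rw [Finset.sum_mul]
    refine Finset.sum_congr rfl fun j _ => ?_
    rw [Finset.mul_sum]
    refine Finset.sum_congr rfl fun l _ => ?_
    rw [← mul_pow, ← mul_pow, ← zpow_add₀ hz, ← zpow_add₀ hz]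
    congr 2
    ring
  simp only [h1]
  rw [Finset.sum_comm, auxT]
  push_cast
  rw [Finset.mul_sum]
  refine Finset.sum_congr rfl fun i hi => ?_
  rw [Finset.sum_comm, Finset.mul_sum]
  refine Finset.sum_congr rfl fun j hj => ?_
  rw [Finset.sum_comm, Finset.mul_sum]
  refine Finset.sum_congr rfl fun l hl => ?_
  rw [Finset.mem_range] at hi hj hl
  rw [aux_orth hp]
  by_cases h : i + j + l = 3 * m
  · rw [if_pos h, if_pos]
    · simp
    · have : (i:ℤ) + j + l - 3 * m = 0 := by omega
      simp [this]
  · rw [if_neg h, if_neg]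
    · simp
    · intro hd
      have := Int.eq_zero_of_abs_lt_dvd hd (by rw [abs_lt]; omega)
      omega

lemma aux_main (m : ℕ) (hm : 1 ≤ m) (z : ℤ) :
    (fM m ((2*m+1)^2)).coeff 3 ≠ (z : ℂ) := by
  intro hzz
  set N := (2*m+1)^2 with hN
  have hN3 : 3 * m < N := by rw [hN]; nlinarith
  have hN0 : N ≠ 0 := by omega
  have hp := aux_prim N hN0
  have hodd : Odd N := by rw [hN]; exact Odd.pow ⟨m, rfl⟩
  have hL : (2*(m:ℂ)+1) ≠ 0 := by exact_mod_cast Nat.succ_ne_zero (2*m)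
  set g : ℕ → ℂ[X] := fun k => - fMk m N (k:ℤ) with hg
  have hf : fM m N = - ∏ k ∈ Finset.range N, g k := by
    simp only [hg, Finset.prod_neg, Finset.card_range, hodd.neg_one_pow, fM]
    simp
  have hc : ∀ k r, (g k).coeff r
      = (1 - 2 * r / (2*(m:ℂ)+1)) * aeval (zetaN N ^ k) ((auxG N m).coeff r) := by
    intro k r
    have := aux_coeff m (auxw N m k) r
    rw [← auxE_coeff N m k r hN0]
    have h2 : (g k).coeff r = - (Matrix.diagonal (auxw N m k) * coinM m).charpoly.coeff r := by
      simp only [hg, coeff_neg]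
      rfl
    rw [h2, this]
    ring
  have h0 : ∀ k, (g k).coeff 0 = 1 := by
    intro k
    rw [hc, ← auxE_coeff N m k 0 hN0, auxE_coeff_zero N m k hN0]
    simp
  obtain ⟨-, -, -, h3⟩ := aux_newton (Finset.range N) g h0
  have hz' : (∏ k ∈ Finset.range N, g k).coeff 3 = - (z:ℂ) := by
    rw [← hzz, hf, coeff_neg, neg_neg]
  obtain ⟨s1, hs1⟩ := aux_int hp ((auxG N m).coeff 1)
  obtain ⟨s2, hs2⟩ := aux_int hp ((auxG N m).coeff 1 ^ 2)
  obtain ⟨s3, hs3⟩ := aux_int hp ((auxG N m).coeff 2)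
  obtain ⟨s4, hs4⟩ := aux_int hp ((auxG N m).coeff 1 * (auxG N m).coeff 2)
  obtain ⟨s5, hs5⟩ := aux_int hp ((auxG N m).coeff 3)
  have hT := aux_cube N m hN3
  simp only [auxE_coeff N m _ _ hN0] at hT
  simp only [map_pow, map_mul] at hs2 hs4
  have hab : ∑ k ∈ Finset.range N, (g k).coeff 1 * (g k).coeff 2 =
      (1 - 2 / (2*(m:ℂ)+1)) * (1 - 2 * 2 / (2*(m:ℂ)+1)) * ((N:ℂ) * s4) := by
    rw [← hs4, Finset.mul_sum]
    refine Finset.sum_congr rfl fun k _ => ?_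
    rw [hc, hc]
    push_cast
    ring
  rw [hz', hab] at h3
  simp only [hc, mul_pow, ← Finset.mul_sum, hs1, hs2, hs3, hs5, hT] at h3
  have hNc : (N:ℂ) = (2*(m:ℂ)+1)^2 := by rw [hN]; push_cast; ring
  rw [hNc] at h3
  have hT4 : 4 * (auxT m : ℂ) = 3 * (2*(m:ℂ)+1)^2 + 1 := by exact_mod_cast auxT_eq m
  obtain ⟨L, hLdef⟩ : ∃ L : ℤ, L = 2 * (m:ℤ) + 1 := ⟨_, rfl⟩
  have hLc : (2*(m:ℂ)+1) = (L:ℂ) := by rw [hLdef]; push_cast; ring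
  rw [hLc] at h3 hT4 hL
  have key : (L - 2)^3 * (3 * L^2 + 1) = L * (2 * (-6 * z - ((L-2)^3 * L^3 * s1^3
      - 3 * (L-2)^3 * L * s1 * s2 + 6 * (L-2) * (L-4) * L^2 * s1 * s3
      - 6 * (L-2) * (L-4) * s4 + 6 * (L-6) * L * s5))) := by
    have : ((L:ℂ) - 2)^3 * (3 * L^2 + 1) = L * (2 * (-6 * z - ((L-2)^3 * L^3 * s1^3
      - 3 * (L-2)^3 * L * s1 * s2 + 6 * (L-2) * (L-4) * L^2 * s1 * s3
      - 6 * (L-2) * (L-4) * s4 + 6 * (L-6) * L * s5))) := by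
      rw [← hT4]
      rw [show (-6 * (z:ℂ)) = 6 * -(z:ℂ) by ring, h3]
      push_cast
      field_simp
      ring
    exact_mod_cast this
  have hd : L ∣ 8 := by
    have h1 : L ∣ (L - 2)^3 * (3 * L^2 + 1) := ⟨_, key⟩
    have h2 : (L - 2)^3 * (3 * L^2 + 1) = L * (3*L^4 - 18*L^3 + 37*L^2 - 30*L + 12) - 8 := by ring
    rw [h2] at h1
    exact (dvd_sub_right (Dvd.intro _ rfl)).1 h1
  have hcop : IsCoprime L 8 := by
    have : IsCoprime L 2 := ⟨1, -(m:ℤ), by rw [hLdef]; ring⟩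
    have := this.pow_right (n := 3)
    norm_num at this
    exact this
  have hu := hcop.isUnit_of_dvd' dvd_rfl hd
  rw [Int.isUnit_iff] at hu
  omega

/-- For an odd prime `L = 2m+1 ≥ 3`, the polynomial `f^{M,L}_{L²}` does not
have all integer coefficients; in particular its coefficient of `x³` is not an integer. -/
theorem stmt11 (m : ℕ) (hm : 1 ≤ m) (hp : Nat.Prime (2*m+1)) :
    (¬ ∀ i : ℕ, ∃ z : ℤ, (fM m ((2*m+1)^2)).coeff i = (z : ℂ)) ∧
    ¬ ∃ z : ℤ, (fM m ((2*m+1)^2)).coeff 3 = (z : ℂ) := by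
  have h : ¬ ∃ z : ℤ, (fM m ((2*m+1)^2)).coeff 3 = (z : ℂ) := by
    rintro ⟨z, hz⟩
    exact aux_main m hm z hz
  exact ⟨fun h' => h (h' 3), h⟩
end

section
/- Let L = 2m+1 ≥ 3 be an odd integer and let n ≥ 2 be an integer coprime to L. Then the polynomial f^{F,L}_n(x) does not have all integer coefficients; that is, some coefficient of f^{F,L}_n (in particular its coefficient of x) is not an integer. -/
open Matrix Polynomial

theorem aux_entry (m : ℕ) (i j : Fin (2*m+1)) :
    coinF m i j = 2 / (2*(m:ℂ)+1) - if j = Fin.rev i then 1 else 0 := by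
  have hL : (2*(m:ℂ)+1) ≠ 0 := by exact_mod_cast Nat.succ_ne_zero (2*m)
  have h : ((i : ℕ) + (j : ℕ) = 2*m) ↔ j = Fin.rev i := by
    rw [Fin.ext_iff, Fin.val_rev]; omega
  unfold coinF
  by_cases hj : j = Fin.rev i
  · rw [if_pos (h.2 hj), if_pos hj]; field_simp; ring
  · rw [if_neg (fun hh => hj (h.1 hh)), if_neg hj]; ring

theorem aux_sq (m : ℕ) : coinF m * coinF m = 1 := by
  have hL : (2*(m:ℂ)+1) ≠ 0 := by exact_mod_cast Nat.succ_ne_zero (2*m)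
  ext i k
  rw [Matrix.mul_apply, Matrix.one_apply]
  have h : ∀ j : Fin (2*m+1), coinF m i j * coinF m j k =
      (2 / (2*(m:ℂ)+1))^2 - (if j = Fin.rev i then 2 / (2*(m:ℂ)+1) else 0)
       - (if j = Fin.rev k then 2 / (2*(m:ℂ)+1) else 0)
       + (if j = Fin.rev i then (if i = k then 1 else 0) else 0) := by
    intro j
    rw [aux_entry, aux_entry]
    have h1 : k = Fin.rev j ↔ j = Fin.rev k := by
      constructor <;> (rintro rfl; simp)
    simp only [h1]
    by_cases hi : j = Fin.rev i
    · subst hi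
      simp only [Fin.rev_inj]
      split_ifs <;> ring
    · simp only [if_neg hi]
      split_ifs <;> ring
  simp only [h, Finset.sum_add_distrib, Finset.sum_sub_distrib, Finset.sum_ite_eq',
    Finset.mem_univ, if_true, Finset.sum_const, Finset.card_univ, Fintype.card_fin, nsmul_eq_mul]
  push_cast
  have : (2*(m:ℂ)+1) * (2 / (2*(m:ℂ)+1))^2 - 2 / (2*(m:ℂ)+1) - 2 / (2*(m:ℂ)+1) = 0 := by
    field_simp; ring
  rw [this, zero_add]

theorem aux_prim_s14 (n : ℕ) (hn : n ≠ 0) : IsPrimitiveRoot (zetaN n) n :=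
  Complex.isPrimitiveRoot_exp n hn

theorem aux_det_s14 (m n : ℕ) (k : ℤ) : (ZmatPow n m k).det = 1 := by
  have hz : zetaN n ≠ 0 := Complex.exp_ne_zero _
  have hs : ∑ i : Fin (2*m+1), ((m : ℤ) - ((i : ℕ) : ℤ)) * k = 0 := by
    have h := Equiv.sum_comp Fin.revPerm
      (fun i : Fin (2*m+1) => ((m : ℤ) - ((i : ℕ) : ℤ)) * k)
    have h2 : ∀ i : Fin (2*m+1), ((m : ℤ) - ((Fin.revPerm i : Fin (2*m+1)) : ℕ)) * k
        = - (((m : ℤ) - ((i : ℕ) : ℤ)) * k) := by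
      intro i
      have := i.2
      rw [Fin.revPerm_apply, Fin.val_rev, Nat.cast_sub (by omega)]
      push_cast; ring
    simp only [h2, Finset.sum_neg_distrib] at h
    omega
  have hp : ∀ s : Finset (Fin (2*m+1)), ∏ i ∈ s, zetaN n ^ (((m : ℤ) - ((i : ℕ) : ℤ)) * k)
      = zetaN n ^ (∑ i ∈ s, ((m : ℤ) - ((i : ℕ) : ℤ)) * k) := by
    intro s
    induction s using Finset.induction_on with
    | empty => simp
    | insert a s ha ih => rw [Finset.prod_insert ha, Finset.sum_insert ha, ih, zpow_add₀ hz]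
  rw [ZmatPow, Matrix.det_diagonal, hp, hs, zpow_zero]

theorem aux_Zinv (m n : ℕ) (k : ℤ) : ZmatPow n m k * ZmatPow n m (-k) = 1 := by
  have hz : zetaN n ≠ 0 := Complex.exp_ne_zero _
  rw [ZmatPow, ZmatPow, Matrix.diagonal_mul_diagonal, ← Matrix.diagonal_one]
  congr 1
  funext i
  rw [← zpow_add₀ hz]
  simp

theorem aux_fFk (m n : ℕ) (k : ℤ) :
    fFk m n k = C (-(coinF m).det) * (coinF m * ZmatPow n m (-k)).charpolyRev := by
  have hd : (coinF m).det * (coinF m).det = 1 := by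
    rw [← Matrix.det_mul, aux_sq, Matrix.det_one]
  have hinv : (ZmatPow n m k * coinF m) * (coinF m * ZmatPow n m (-k)) = 1 := by
    rw [Matrix.mul_assoc, ← Matrix.mul_assoc (coinF m), aux_sq, Matrix.one_mul, aux_Zinv]
  have hdet : (coinF m * ZmatPow n m (-k)).det = (coinF m).det := by
    rw [Matrix.det_mul, aux_det_s14, mul_one]
  have hu : IsUnit (coinF m * ZmatPow n m (-k)) := IsUnit.of_mul_eq_one_right _ hinv
  have h := Matrix.charpoly_inv _ hu
  rw [Matrix.inv_eq_left_inv hinv, hdet] at h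
  rw [fFk, h, Ring.inverse_eq_inv', ← eq_inv_of_mul_eq_one_left hd]
  congr 1
  rw [Fintype.card_fin, pow_succ, pow_mul]
  simp

theorem aux_prod (s : Finset ℕ) (g : ℕ → ℂ[X]) (h : ∀ k, (g k).coeff 0 = 1) :
    (∏ k ∈ s, g k).coeff 0 = 1 ∧ (∏ k ∈ s, g k).coeff 1 = ∑ k ∈ s, (g k).coeff 1 := by
  induction s using Finset.induction_on with
  | empty => simp [Polynomial.coeff_one]
  | insert a s ha ih =>
    rw [Finset.prod_insert ha, Finset.sum_insert ha, Polynomial.mul_coeff_zero,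
      Polynomial.mul_coeff_one, ih.1, ih.2, h]
    constructor <;> ring

theorem aux_coeff_s14 (m n : ℕ) : (fF m n).coeff 1 =
    (-(coinF m).det)^n * -∑ k ∈ Finset.range n, (coinF m * ZmatPow n m (-(k:ℤ))).trace := by
  have h : fF m n = C ((-(coinF m).det)^n) *
      ∏ k ∈ Finset.range n, (coinF m * ZmatPow n m (-(k:ℤ))).charpolyRev := by
    simp only [fF, aux_fFk, Finset.prod_mul_distrib, Finset.prod_const, Finset.card_range, C_pow]
  rw [h, Polynomial.coeff_C_mul, (aux_prod _ _ _).2]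
  · simp only [Matrix.coeff_charpolyRev_eq_neg_trace, Finset.sum_neg_distrib]
  · intro k
    rw [Polynomial.coeff_zero_eq_eval_zero, Matrix.eval_charpolyRev]

theorem aux_geom (n : ℕ) (hn : n ≠ 0) (a : ℤ) :
    ∑ k ∈ Finset.range n, zetaN n ^ (a * -(k:ℤ)) = if (n:ℤ) ∣ a then (n:ℂ) else 0 := by
  have hp := aux_prim_s14 n hn
  have h1 : ∀ k : ℕ, zetaN n ^ (a * -(k:ℤ)) = (zetaN n ^ (-a)) ^ k := by
    intro k
    rw [← zpow_natCast, ← _root_.zpow_mul]; congr 1; ring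
  simp only [h1]
  split_ifs with h
  · rw [(hp.zpow_eq_one_iff_dvd _).2 (by simpa using h)]; simp
  · have hne : zetaN n ^ (-a) ≠ 1 := by
      rw [Ne, hp.zpow_eq_one_iff_dvd]; simpa using h
    rw [geom_sum_eq hne, ← zpow_natCast, ← _root_.zpow_mul,
      (hp.zpow_eq_one_iff_dvd _).2 (Dvd.intro_left _ rfl)]
    simp

theorem aux_sum_s14 (m n : ℕ) (hn : n ≠ 0) :
    ∑ k ∈ Finset.range n, (coinF m * ZmatPow n m (-(k:ℤ))).trace =
    (n:ℂ) * (2 / (2*(m:ℂ)+1) * ((Finset.univ.filter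
      (fun i : Fin (2*m+1) => (n:ℤ) ∣ (m:ℤ) - ((i:ℕ):ℤ))).card : ℂ) - 1) := by
  simp only [Matrix.trace, Matrix.diag, ZmatPow, Matrix.mul_diagonal]
  rw [Finset.sum_comm]
  simp only [← Finset.mul_sum, aux_geom n hn]
  have h : ∀ i : Fin (2*m+1), coinF m i i * (if (n:ℤ) ∣ (m:ℤ) - ((i:ℕ):ℤ) then (n:ℂ) else 0)
      = (n:ℂ) * (2 / (2*(m:ℂ)+1) * (if (n:ℤ) ∣ (m:ℤ) - ((i:ℕ):ℤ) then 1 else 0)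
         - if i = ⟨m, by omega⟩ then 1 else 0) := by
    intro i
    have hi : i = Fin.rev i ↔ i = ⟨m, by omega⟩ := by
      rw [Fin.ext_iff, Fin.ext_iff, Fin.val_rev]
      have := i.2
      simp only
      omega
    rw [aux_entry]
    simp only [hi]
    by_cases him : i = ⟨m, by omega⟩
    · subst him; simp; ring
    · simp only [if_neg him]; split_ifs <;> ring
  simp only [h]
  rw [← Finset.mul_sum, Finset.sum_sub_distrib, ← Finset.mul_sum, Finset.sum_ite_eq']
  simp

/-- For odd `L = 2m+1 ≥ 3` and `n ≥ 2` coprime to `L`, the polynomial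
`f^{F,L}_n` does not have all integer coefficients; in particular its coefficient of `x`
is not an integer. -/
theorem stmt14 (m n : ℕ) (hm : 1 ≤ m) (hn : 2 ≤ n) (hcop : Nat.gcd n (2*m+1) = 1) :
    (¬ ∀ i : ℕ, ∃ z : ℤ, (fF m n).coeff i = (z : ℂ)) ∧
    ¬ ∃ z : ℤ, (fF m n).coeff 1 = (z : ℂ) := by
  suffices hmain : ¬ ∃ z : ℤ, (fF m n).coeff 1 = (z : ℂ) from ⟨fun h => hmain (h 1), hmain⟩
  rintro ⟨z, hz⟩
  have hL : (2*(m:ℂ)+1) ≠ 0 := by exact_mod_cast Nat.succ_ne_zero (2*m)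
  have hd : (coinF m).det * (coinF m).det = 1 := by
    rw [← Matrix.det_mul, aux_sq, Matrix.det_one]
  rw [aux_coeff_s14, aux_sum_s14 m n (by omega)] at hz
  set S := Finset.univ.filter (fun i : Fin (2*m+1) => (n:ℤ) ∣ (m:ℤ) - ((i:ℕ):ℤ)) with hS
  have hpos : 0 < S.card := Finset.card_pos.2 ⟨⟨m, by omega⟩, by simp [hS]⟩
  have hlt : S.card < 2*m+1 := by
    have : S.card < Fintype.card (Fin (2*m+1)) := by
      apply Finset.card_lt_univ_of_notMem (x := ⟨m-1, by omega⟩)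
      rw [hS, Finset.mem_filter]
      rintro ⟨-, h⟩
      have h2 := Int.le_of_dvd (by simp only; omega) h
      simp only at h2
      omega
    simpa using this
  have hsgn : ∃ e : ℤ, (n:ℂ) * (2 / (2*(m:ℂ)+1) * (S.card : ℂ) - 1) = (e : ℂ) := by
    have hpm : (-(coinF m).det)^n = 1 ∨ (-(coinF m).det)^n = -1 := by
      rw [← mul_self_eq_one_iff, ← mul_pow, neg_mul_neg, hd, one_pow]
    rcases hpm with h | h <;> rw [h] at hz
    · exact ⟨-z, by push_cast; rw [← hz]; ring⟩
    · exact ⟨z, by rw [← hz]; ring⟩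
  obtain ⟨e, he⟩ := hsgn
  have hint : (2 * (n:ℤ) * (S.card : ℤ)) = (2*(m:ℤ)+1) * (e + n) := by
    have : (2 * (n:ℂ) * (S.card : ℂ)) = (2*(m:ℂ)+1) * (e + n) := by
      rw [← he]; field_simp; ring
    exact_mod_cast this
  have hdvd : (2*m+1) ∣ (2*n) * S.card := by
    have : ((2*m+1 : ℕ) : ℤ) ∣ ((2*n*S.card : ℕ) : ℤ) := by
      refine ⟨e + n, ?_⟩
      push_cast
      exact hint
    exact_mod_cast this
  have hc2 : Nat.Coprime (2*m+1) (2*n) := by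
    apply Nat.Coprime.mul_right
    · simp
    · exact (Nat.coprime_comm.1 hcop)
  exact absurd (Nat.le_of_dvd hpos (hc2.dvd_of_dvd_mul_left hdvd)) (by omega)
end

section
/- Let L = 2m+1 ≥ 3 be an odd prime. Then the polynomial f^{F,L}_{L²}(x) does not have all integer coefficients; that is, some coefficient of f^{F,L}_{L²} (in particular its coefficient of x³) is not an integer. -/
open Matrix Polynomial

/-- The anti-diagonal permutation matrix. -/
def antiP (m : ℕ) : Matrix (Fin (2*m+1)) (Fin (2*m+1)) ℤ :=
  fun i j => if j = Fin.rev i then 1 else 0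

/-- Weighted anti-diagonal matrix. -/
noncomputable def antiR (m : ℕ) (d : Fin (2*m+1) → ℂ) :
    Matrix (Fin (2*m+1)) (Fin (2*m+1)) ℂ :=
  fun i j => if j = Fin.rev i then d i else 0

lemma antiR_conj (m : ℕ) (d e : Fin (2*m+1) → ℂ) (h1 : ∀ i, e i * e i = d i) :
    -antiR m d = diagonal e * ((-antiP m).map (Int.castRingHom ℂ) *
      diagonal (fun i => e (Fin.rev i))) := by
  ext i j
  rw [diagonal_mul, mul_diagonal]
  by_cases h : j = Fin.rev i
  · subst h
    simp [antiR, antiP, ← h1]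
  · simp [antiR, antiP, h]

lemma antiR_charpoly (m : ℕ) (d e : Fin (2*m+1) → ℂ) (h1 : ∀ i, e i * e i = d i)
    (h2 : ∀ i, e i * e (Fin.rev i) = 1) :
    (-antiR m d).charpoly = (-antiP m).charpoly.map (Int.castRingHom ℂ) := by
  rw [antiR_conj m d e h1, charpoly_mul_comm, Matrix.mul_assoc, diagonal_mul_diagonal]
  have : (diagonal fun i => e (Fin.rev i) * e i) = (1 : Matrix (Fin (2*m+1)) _ ℂ) := by
    rw [← diagonal_one]; congr 1; ext i; rw [mul_comm]; exact h2 i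
  rw [this, Matrix.mul_one, charpoly_map]

lemma antiR_mulVec (m : ℕ) (d v : Fin (2*m+1) → ℂ) :
    antiR m d *ᵥ v = fun i => d i * v (Fin.rev i) := by
  ext i
  simp [antiR, mulVec, dotProduct]

lemma antiR_sq (m : ℕ) (d : Fin (2*m+1) → ℂ) (h : ∀ i, d i * d (Fin.rev i) = 1) :
    antiR m d * antiR m d = 1 := by
  ext i j
  rw [Matrix.mul_apply]
  simp only [antiR, ite_mul, zero_mul, Finset.sum_ite_eq', Finset.sum_ite_eq, Finset.mem_univ,
    if_true, Fin.rev_rev, Matrix.one_apply]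
  by_cases hij : i = j
  · subst hij; simp [h]
  · simp [hij, Ne.symm hij]

lemma antiR_prod (m : ℕ) (d : Fin (2*m+1) → ℂ) (h : ∀ i, d i * d (Fin.rev i) = 1) :
    (antiR m d).charpoly * (-antiR m d).charpoly = (X^2 - 1)^(2*m+1) := by
  apply Polynomial.funext
  intro x
  rw [eval_mul, eval_charpoly, eval_charpoly, ← det_mul]
  have : (scalar (Fin (2*m+1)) x - antiR m d) * (scalar (Fin (2*m+1)) x - -antiR m d)
      = (x^2-1) • (1 : Matrix (Fin (2*m+1)) (Fin (2*m+1)) ℂ) := by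
    have hs : scalar (Fin (2*m+1)) x = x • (1 : Matrix (Fin (2*m+1)) (Fin (2*m+1)) ℂ) := by
      rw [smul_one_eq_diagonal]; rfl
    rw [hs]
    simp only [sub_neg_eq_add, Matrix.mul_add, Matrix.sub_mul, antiR_sq m d h,
      Matrix.smul_mul, Matrix.mul_smul, Matrix.one_mul, Matrix.mul_one, smul_smul]
    module
  rw [this, det_smul]
  simp

lemma coin_charpoly (m : ℕ) (d : Fin (2*m+1) → ℂ) (h : ∀ i, d i * d (Fin.rev i) = 1) :
    (antiR m d).charpoly * (diagonal d * coinF m).charpoly =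
      (X^2 - 1)^(2*m) * (X^2 + 1 - C (2 / (2*(m:ℂ)+1) * ∑ i, d i) * X) := by
  apply Polynomial.funext
  intro x
  rw [eval_mul, eval_charpoly, eval_charpoly, ← det_mul]
  have hL : (2*(m:ℂ)+1) ≠ 0 := by exact_mod_cast (by omega : 2*m+1 ≠ 0)
  set c : ℂ := 2 / (2*(m:ℂ)+1) with hc
  have hA : diagonal d * coinF m = c • vecMulVec d 1 - antiR m d := by
    ext i j
    have hiff : ((i : ℕ) + (j : ℕ) = 2*m) ↔ j = Fin.rev i := by
      rw [Fin.ext_iff, Fin.val_rev]; omega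
    rw [diagonal_mul]
    simp only [coinF, antiR, hiff, Matrix.sub_apply, Matrix.smul_apply, vecMulVec_apply,
      Pi.one_apply, smul_eq_mul]
    split_ifs
    · rw [hc]; field_simp; ring
    · ring
  have hs : scalar (Fin (2*m+1)) x = x • (1 : Matrix (Fin (2*m+1)) (Fin (2*m+1)) ℂ) := by
    rw [smul_one_eq_diagonal]; rfl
  have hRd : antiR m d *ᵥ d = 1 := by
    rw [antiR_mulVec]; ext i; exact h i
  have key : (scalar (Fin (2*m+1)) x - antiR m d) * (scalar (Fin (2*m+1)) x - diagonal d * coinF m)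
      = scalar (Fin (2*m+1)) (x^2-1) - vecMulVec (c • (x • d - 1)) 1 := by
    have hs' : scalar (Fin (2*m+1)) (x^2-1)
        = (x^2-1) • (1 : Matrix (Fin (2*m+1)) (Fin (2*m+1)) ℂ) := by
      rw [smul_one_eq_diagonal]; rfl
    rw [hA, hs, hs', ← hRd, smul_vecMulVec, sub_vecMulVec, smul_vecMulVec, ← mul_vecMulVec]
    simp only [Matrix.mul_sub, Matrix.sub_mul, antiR_sq m d h,
      Matrix.smul_mul, Matrix.mul_smul, Matrix.one_mul, Matrix.mul_one, smul_smul]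
    module
  rw [key, ← eval_charpoly, charpoly_vecMulVec]
  have hdot : (c • (x • d - 1)) ⬝ᵥ (1 : Fin (2*m+1) → ℂ) = c * (x * ∑ i, d i) - 2 := by
    have hc2 : c * (2*(m:ℂ)+1) = 2 := by rw [hc]; field_simp
    simp only [dotProduct_one, Pi.smul_apply, Pi.sub_apply, Pi.one_apply, smul_eq_mul,
      ← Finset.mul_sum, Finset.sum_sub_distrib]
    simp
    linear_combination - hc2
  rw [hdot]
  simp [eval_finsetSum]
  ring

lemma main_fac (m : ℕ) (d e : Fin (2*m+1) → ℂ) (h1 : ∀ i, e i * e i = d i)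
    (h2 : ∀ i, e i * e (Fin.rev i) = 1) :
    (X^2 - 1) * (diagonal d * coinF m).charpoly =
      (-antiP m).charpoly.map (Int.castRingHom ℂ) *
        (X^2 + 1 - C (2 / (2*(m:ℂ)+1) * ∑ i, d i) * X) := by
  have h : ∀ i, d i * d (Fin.rev i) = 1 := by
    intro i
    rw [← h1, ← h1]
    linear_combination (e i * e (Fin.rev i) + 1) * h2 i
  rw [← antiR_charpoly m d e h1 h2]
  have hA := antiR_prod m d h
  have hB := coin_charpoly m d h
  have hne : (X^2 - 1 : ℂ[X]) ^ (2*m) ≠ 0 := by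
    apply pow_ne_zero
    have := (monic_X_pow_sub_C (1:ℂ) (two_ne_zero)).ne_zero
    simpa using this
  apply mul_left_cancel₀ hne
  linear_combination (-antiR m d).charpoly * hB - (diagonal d * coinF m).charpoly * hA

lemma antiP_sq (m : ℕ) : antiP m * antiP m = 1 := by
  ext i j
  rw [Matrix.mul_apply]
  simp only [antiP, ite_mul, zero_mul, one_mul, Finset.sum_ite_eq', Finset.sum_ite_eq,
    Finset.mem_univ, if_true, Fin.rev_rev, Matrix.one_apply, eq_comm]

lemma antiP_coeff (m : ℕ) : IsUnit ((-antiP m).charpoly.coeff 0) := by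
  have h : IsUnit (-antiP m).det := by
    apply IsUnit.of_mul_eq_one (-antiP m).det
    rw [← det_mul]; simp [antiP_sq]
  rw [det_eq_sign_charpoly_coeff] at h
  exact isUnit_of_mul_isUnit_right h

lemma tri_prod {ι : Type*} (s : Finset ι) (t : ι → ℂ) :
    (∏ k ∈ s, (X^2 + 1 - C (t k) * X)).coeff 0 = 1 ∧
    (∏ k ∈ s, (X^2 + 1 - C (t k) * X)).coeff 1 = - ∑ k ∈ s, t k ∧
    (∏ k ∈ s, (X^2 + 1 - C (t k) * X)).coeff 2 =
      s.card + ((∑ k ∈ s, t k)^2 - ∑ k ∈ s, t k^2) / 2 ∧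
    (∏ k ∈ s, (X^2 + 1 - C (t k) * X)).coeff 3 =
      -(((∑ k ∈ s, t k)^3 - 3 * (∑ k ∈ s, t k) * (∑ k ∈ s, t k^2) + 2 * ∑ k ∈ s, t k^3) / 6
        + (s.card - 1) * ∑ k ∈ s, t k) := by
  classical
  induction s using Finset.induction_on with
  | empty => simp [coeff_one]
  | insert a s ha ih =>
    obtain ⟨i0, i1, i2, i3⟩ := ih
    simp only [Finset.prod_insert ha, Finset.sum_insert ha, Finset.card_insert_of_notMem ha]
    set p := ∏ k ∈ s, (X^2 + 1 - C (t k) * X)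
    have e : (X^2 + 1 - C (t a) * X) * p = p * X^2 + p - C (t a) * (p * X) := by ring
    rw [e]
    simp only [coeff_add, coeff_sub, coeff_C_mul, coeff_mul_X_pow', coeff_mul_X, i0, i1, i2, i3,
      coeff_mul_X_zero]
    refine ⟨?_, ?_, ?_, ?_⟩
    · simp [i0]
    · have := coeff_mul_X p 0
      simp only [zero_add] at this
      simp [this, i0]; ring
    · have := coeff_mul_X p 1
      simp only [Nat.reduceAdd] at this
      simp [this, i0, i1]; ring
    · have := coeff_mul_X p 2
      simp only [Nat.reduceAdd] at this
      simp [this, i1, i2]; ring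

lemma root_sum (N : ℕ) (hN : N ≠ 0) (a : ℤ) (ha : |a| < N) :
    ∑ k ∈ Finset.range N, zetaN N ^ (a * (k : ℤ)) = if a = 0 then (N : ℂ) else 0 := by
  have hz : IsPrimitiveRoot (zetaN N) N := Complex.isPrimitiveRoot_exp N hN
  split_ifs with h
  · simp [h]
  · have h1 : zetaN N ^ a ≠ 1 := by
      intro h1
      rw [hz.zpow_eq_one_iff_dvd] at h1
      exact h (Int.eq_zero_of_abs_lt_dvd h1 ha)
    have h2 : (zetaN N ^ a) ^ N = 1 := by
      rw [← zpow_natCast, ← _root_.zpow_mul, mul_comm, _root_.zpow_mul, zpow_natCast, hz.pow_eq_one, _root_.one_zpow]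
    simp only [_root_.zpow_mul, zpow_natCast]
    have := geom_sum_mul (zetaN N ^ a) N
    rw [h2, sub_self] at this
    exact (mul_eq_zero.mp this).resolve_right (sub_ne_zero.mpr h1)

/-- The trace-like sum `∑_j ζ^{jk}`. -/
noncomputable def sk (m N k : ℕ) : ℂ :=
  ∑ i : Fin (2*m+1), zetaN N ^ (((m : ℤ) - ((i : ℕ) : ℤ)) * (k : ℤ))

lemma count1 (m : ℕ) : ∑ i : Fin (2*m+1), (if (i:ℕ) = m then 1 else 0) = 1 := by
  rw [Fin.sum_univ_eq_sum_range (fun i => if i = m then 1 else 0)]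
  rw [Finset.sum_ite_eq', if_pos (by simp; omega)]

lemma count2 (m : ℕ) : ∑ i : Fin (2*m+1), ∑ j : Fin (2*m+1),
    (if (i:ℕ) + j = 2*m then 1 else 0) = 2*m+1 := by
  have : ∀ i : Fin (2*m+1), ∑ j : Fin (2*m+1), (if (i:ℕ) + j = 2*m then 1 else 0) = 1 := by
    intro i
    rw [Finset.sum_congr rfl (g := fun j => if j = Fin.rev i then 1 else 0)]
    · simp
    · intro j _
      have hiff : ((i : ℕ) + (j : ℕ) = 2*m) ↔ j = Fin.rev i := by
        rw [Fin.ext_iff, Fin.val_rev]; omega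
      simp [hiff]
  simp [this]

lemma count3_inner (m i : ℕ) (hi : i < 2*m+1) :
    ∑ j ∈ Finset.range (2*m+1), ∑ l ∈ Finset.range (2*m+1),
      (if i + j + l = 3*m then 1 else 0) = if i ≤ m then m+1+i else 3*m+1-i := by
  have h1 : ∀ j, ∑ l ∈ Finset.range (2*m+1), (if i + j + l = 3*m then 1 else 0)
      = if j ∈ Finset.Ico (m-i) (3*m+1-i) then 1 else 0 := by
    intro j
    simp only [Finset.mem_Ico]
    split_ifs with h
    · rw [Finset.sum_eq_single (3*m-i-j)]
      · rw [if_pos (by omega)]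
      · intro b _ hb; rw [if_neg (by omega)]
      · intro hb; simp at hb; omega
    · apply Finset.sum_eq_zero
      intro l hl; simp at hl; rw [if_neg (by omega)]
  simp only [h1]
  rw [Finset.sum_ite_mem, Finset.sum_const, smul_eq_mul, mul_one]
  have : Finset.range (2*m+1) ∩ Finset.Ico (m-i) (3*m+1-i)
      = Finset.Ico (m-i) (min (2*m+1) (3*m+1-i)) := by
    ext j; simp; omega
  rw [this, Nat.card_Ico]
  split_ifs <;> omega

lemma count3 (m : ℕ) : ∑ i : Fin (2*m+1), ∑ j : Fin (2*m+1), ∑ l : Fin (2*m+1),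
    (if (i:ℕ) + j + l = 3*m then 1 else 0) = 3*m^2+3*m+1 := by
  have e1 : ∀ i j : Fin (2*m+1), ∑ l : Fin (2*m+1), (if (i:ℕ) + j + l = 3*m then 1 else 0)
     = ∑ l ∈ Finset.range (2*m+1), (if (i:ℕ) + j + l = 3*m then 1 else 0) := fun i j =>
    Fin.sum_univ_eq_sum_range (fun l => if (i:ℕ) + j + l = 3*m then 1 else 0) _
  simp only [e1]
  have e2 : ∀ i : Fin (2*m+1), ∑ j : Fin (2*m+1), ∑ l ∈ Finset.range (2*m+1),
      (if (i:ℕ) + j + l = 3*m then 1 else 0) = if (i:ℕ) ≤ m then m+1+i else 3*m+1-i := fun i => by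
    rw [← count3_inner m i i.2]
    exact Fin.sum_univ_eq_sum_range
      (fun j => ∑ l ∈ Finset.range (2*m+1), if (i:ℕ) + j + l = 3*m then 1 else 0) _
  simp only [e2]
  rw [Fin.sum_univ_eq_sum_range (fun i => if i ≤ m then m+1+i else 3*m+1-i),
    show 2*m+1 = (m+1) + m by ring, Finset.sum_range_add]
  have f1 : ∑ i ∈ Finset.range (m+1), (if i ≤ m then m+1+i else 3*m+1-i)
      = ∑ i ∈ Finset.range (m+1), (m+1+i) := by
    apply Finset.sum_congr rfl
    intro i hi; simp at hi; rw [if_pos (by omega)]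
  have f2 : ∑ i ∈ Finset.range m, (if m+1+i ≤ m then m+1+(m+1+i) else 3*m+1-(m+1+i))
      = ∑ i ∈ Finset.range m, (m+1+(m-1-i)) := by
    apply Finset.sum_congr rfl
    intro i hi; simp at hi; rw [if_neg (by omega)]; omega
  rw [f1, f2, Finset.sum_range_reflect (fun i => m+1+i), Finset.sum_range_succ]
  have g : 2 * ∑ i ∈ Finset.range m, (m+1+i) = 3*m^2+m := by
    have := Finset.sum_range_id_mul_two m
    rw [Finset.sum_add_distrib, Finset.sum_const, Finset.card_range, smul_eq_mul]
    rcases m with _ | n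
    · simp
    · simp only [Nat.add_sub_cancel] at this
      nlinarith
  nlinarith

lemma N_bound (m : ℕ) (hm : 1 ≤ m) (a : ℤ) (ha : |a| ≤ 3*m) : |a| < (((2*m+1)^2 : ℕ) : ℤ) := by
  push_cast; nlinarith

lemma pow1 (m : ℕ) (hm : 1 ≤ m) :
    ∑ k ∈ Finset.range ((2*m+1)^2), sk m ((2*m+1)^2) k = (2*(m:ℂ)+1)^2 := by
  simp only [sk]
  rw [Finset.sum_comm]
  have : ∀ i : Fin (2*m+1), ∑ k ∈ Finset.range ((2*m+1)^2),
      zetaN ((2*m+1)^2) ^ (((m : ℤ) - ((i : ℕ) : ℤ)) * (k : ℤ))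
      = (2*(m:ℂ)+1)^2 * ((if (i:ℕ) = m then 1 else 0 : ℕ) : ℂ) := by
    intro i
    rw [root_sum _ (by positivity) _ (N_bound m hm _ (by rw [abs_le]; omega))]
    have : ((m:ℤ) - (i:ℕ) = 0) ↔ (i:ℕ) = m := by omega
    simp [this]
  simp only [this]
  rw [← Finset.mul_sum, ← Nat.cast_sum, count1]; simp

lemma pow2 (m : ℕ) (hm : 1 ≤ m) :
    ∑ k ∈ Finset.range ((2*m+1)^2), sk m ((2*m+1)^2) k ^ 2 = (2*(m:ℂ)+1)^3 := by
  have hz : zetaN ((2*m+1)^2) ≠ 0 := Complex.exp_ne_zero _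
  have hs : ∀ k, sk m ((2*m+1)^2) k ^ 2 = ∑ i : Fin (2*m+1), ∑ j : Fin (2*m+1),
      zetaN ((2*m+1)^2) ^ (((2 * m : ℤ) - ((i : ℕ) : ℤ) - ((j : ℕ) : ℤ)) * (k : ℤ)) := by
    intro k
    rw [sq, sk, Finset.sum_mul_sum]
    refine Finset.sum_congr rfl fun i _ => Finset.sum_congr rfl fun j _ => ?_
    rw [← zpow_add₀ hz]; congr 1; ring
  simp only [hs]
  rw [Finset.sum_comm]
  have : ∀ i j : Fin (2*m+1), ∑ k ∈ Finset.range ((2*m+1)^2),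
      zetaN ((2*m+1)^2) ^ (((2 * m : ℤ) - ((i : ℕ) : ℤ) - ((j : ℕ) : ℤ)) * (k : ℤ))
      = (2*(m:ℂ)+1)^2 * ((if (i:ℕ) + j = 2*m then 1 else 0 : ℕ) : ℂ) := by
    intro i j
    rw [root_sum _ (by positivity) _ (N_bound m hm _ (by rw [abs_le]; omega))]
    have : ((2*m:ℤ) - (i:ℕ) - (j:ℕ) = 0) ↔ (i:ℕ) + j = 2*m := by omega
    simp [this]
  have h2 : ∀ i : Fin (2*m+1), ∑ k ∈ Finset.range ((2*m+1)^2), ∑ j : Fin (2*m+1),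
      zetaN ((2*m+1)^2) ^ (((2 * m : ℤ) - ((i : ℕ) : ℤ) - ((j : ℕ) : ℤ)) * (k : ℤ))
      = (2*(m:ℂ)+1)^2 * ((∑ j : Fin (2*m+1), if (i:ℕ) + j = 2*m then 1 else 0 : ℕ) : ℂ) := by
    intro i
    rw [Finset.sum_comm, Nat.cast_sum, Finset.mul_sum]
    exact Finset.sum_congr rfl fun j _ => this i j
  simp only [h2]
  rw [← Finset.mul_sum, ← Nat.cast_sum, count2]; push_cast; ring

lemma pow3 (m : ℕ) (hm : 1 ≤ m) :
    ∑ k ∈ Finset.range ((2*m+1)^2), sk m ((2*m+1)^2) k ^ 3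
      = (2*(m:ℂ)+1)^2 * (3*m^2+3*m+1) := by
  have hz : zetaN ((2*m+1)^2) ≠ 0 := Complex.exp_ne_zero _
  have hs : ∀ k, sk m ((2*m+1)^2) k ^ 3 =
      ∑ i : Fin (2*m+1), ∑ j : Fin (2*m+1), ∑ l : Fin (2*m+1),
      zetaN ((2*m+1)^2) ^
        (((3 * m : ℤ) - ((i : ℕ) : ℤ) - ((j : ℕ) : ℤ) - ((l : ℕ) : ℤ)) * (k : ℤ)) := by
    intro k
    rw [pow_succ, sq, sk, Finset.sum_mul_sum, Finset.sum_mul]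
    refine Finset.sum_congr rfl fun i _ => ?_
    rw [Finset.sum_mul_sum]
    refine Finset.sum_congr rfl fun j _ => Finset.sum_congr rfl fun l _ => ?_
    rw [← zpow_add₀ hz, ← zpow_add₀ hz]; congr 1; ring
  simp only [hs]
  rw [Finset.sum_comm]
  have : ∀ i j l : Fin (2*m+1), ∑ k ∈ Finset.range ((2*m+1)^2),
      zetaN ((2*m+1)^2) ^
        (((3 * m : ℤ) - ((i : ℕ) : ℤ) - ((j : ℕ) : ℤ) - ((l : ℕ) : ℤ)) * (k : ℤ))
      = (2*(m:ℂ)+1)^2 * ((if (i:ℕ) + j + l = 3*m then 1 else 0 : ℕ) : ℂ) := by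
    intro i j l
    rw [root_sum _ (by positivity) _ (N_bound m hm _ (by rw [abs_le]; omega))]
    have : ((3*m:ℤ) - (i:ℕ) - (j:ℕ) - (l:ℕ) = 0) ↔ (i:ℕ) + j + l = 3*m := by omega
    simp [this]
  have h2 : ∀ i : Fin (2*m+1), ∑ k ∈ Finset.range ((2*m+1)^2),
      ∑ j : Fin (2*m+1), ∑ l : Fin (2*m+1), zetaN ((2*m+1)^2) ^
        (((3 * m : ℤ) - ((i : ℕ) : ℤ) - ((j : ℕ) : ℤ) - ((l : ℕ) : ℤ)) * (k : ℤ))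
      = (2*(m:ℂ)+1)^2 * ((∑ j : Fin (2*m+1), ∑ l : Fin (2*m+1),
          if (i:ℕ) + j + l = 3*m then 1 else 0 : ℕ) : ℂ) := by
    intro i
    rw [Finset.sum_comm, Nat.cast_sum, Finset.mul_sum]
    refine Finset.sum_congr rfl fun j _ => ?_
    rw [Finset.sum_comm, Nat.cast_sum, Finset.mul_sum]
    exact Finset.sum_congr rfl fun l _ => this i j l
  simp only [h2]
  rw [← Finset.mul_sum, ← Nat.cast_sum, count3]; push_cast; ring

lemma fFk_fac (m N k : ℕ) :
    (X^2 - 1) * fFk m N (k : ℤ) = (-antiP m).charpoly.map (Int.castRingHom ℂ) *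
        (X^2 + 1 - C (2 / (2*(m:ℂ)+1) * sk m N k) * X) := by
  set w : ℂ := Complex.exp (2 * Real.pi * Complex.I / N / 2) with hw
  have hw0 : w ≠ 0 := Complex.exp_ne_zero _
  have hww : w * w = zetaN N := by
    rw [hw, ← Complex.exp_add, zetaN]; congr 1; ring
  refine main_fac m _ (fun i => w ^ (((m : ℤ) - ((i : ℕ) : ℤ)) * (k : ℤ))) ?_ ?_
  · intro i; rw [← mul_zpow, hww]
  · intro i
    rw [← zpow_add₀ hw0, ← add_mul]
    have : ((m : ℤ) - ((i : ℕ) : ℤ)) + ((m : ℤ) - ((Fin.rev i : ℕ) : ℤ)) = 0 := by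
      rw [Fin.val_rev]; omega
    rw [this]; simp

lemma fF_fac (m N : ℕ) :
    (X^2 - 1)^N * fF m N = ((-antiP m).charpoly.map (Int.castRingHom ℂ))^N *
        ∏ k ∈ Finset.range N, (X^2 + 1 - C (2 / (2*(m:ℂ)+1) * sk m N k) * X) := by
  have h := Finset.prod_congr (rfl : Finset.range N = Finset.range N)
    (fun k _ => fFk_fac m N k)
  rw [Finset.prod_mul_distrib, Finset.prod_mul_distrib, Finset.prod_const, Finset.prod_const,
    Finset.card_range] at h
  exact h

lemma coeff3_mul (p q : ℂ[X]) : (p * q).coeff 3 = p.coeff 0 * q.coeff 3 + p.coeff 1 * q.coeff 2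
    + p.coeff 2 * q.coeff 1 + p.coeff 3 * q.coeff 0 := by
  rw [coeff_mul, Finset.Nat.sum_antidiagonal_eq_sum_range_succ (fun i j => p.coeff i * q.coeff j)]
  simp [Finset.sum_range_succ]

lemma coeff3_trunc (n : ℕ) (p : ℂ[X]) : ((1 - X^4)^n * p).coeff 3 = p.coeff 3 := by
  induction n with
  | zero => simp
  | succ n ih =>
    have : (1 - X^4 : ℂ[X])^(n+1) * p = (1 - X^4)^n * p - ((1 - X^4)^n * p) * X^4 := by ring
    rw [this, coeff_sub, ih, coeff_mul_X_pow']
    simp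

lemma not_int (m : ℕ) (hm : 1 ≤ m) (hp : Nat.Prime (2*m+1)) :
    ¬ ∃ z : ℤ, (fF m ((2*m+1)^2)).coeff 3 = (z : ℂ) := by
  rintro ⟨z, hz⟩
  have hfac := fF_fac m ((2*m+1)^2)
  have hL : (2*(m:ℂ)+1) ≠ 0 := by exact_mod_cast (by omega : 2*m+1 ≠ 0)
  obtain ⟨h0, h1, h2, h3⟩ := tri_prod (Finset.range ((2*m+1)^2))
    (fun k => 2 / (2*(m:ℂ)+1) * sk m ((2*m+1)^2) k)
  simp only [mul_pow, ← Finset.mul_sum, pow1 m hm, pow2 m hm, pow3 m hm, Finset.card_range]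
    at h1 h2 h3
  set N := (2*m+1)^2 with hN
  set H := ∏ k ∈ Finset.range N, (X^2 + 1 - C (2 / (2*(m:ℂ)+1) * sk m N k) * X) with hH
  set q := (-antiP m).charpoly with hq
  -- integer cofactor
  set G : ℤ[X] := (-(1 + X^2) * q)^N with hG
  have hG0 : IsUnit (G.coeff 0) := by
    rw [hG, coeff_zero_eq_eval_zero, eval_pow, eval_mul]
    apply IsUnit.pow
    rw [← coeff_zero_eq_eval_zero q]
    simpa using antiP_coeff m
  have e : (1 - X^4)^N * fF m N = G.map (Int.castRingHom ℂ) * H := by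
    have : G.map (Int.castRingHom ℂ) = (-(1+X^2))^N * (q.map (Int.castRingHom ℂ))^N := by
      rw [hG]; simp [Polynomial.map_pow, mul_pow]
    rw [this, mul_assoc, ← hfac, ← mul_assoc, ← mul_pow]
    congr 2; ring
  have e3 := congrArg (fun p => p.coeff 3) e
  simp only [coeff3_trunc] at e3
  simp only [coeff3_mul, coeff_map, hz, h0, h1, h2, h3, eq_intCast] at e3
  have hNc : (N : ℂ) = (2*(m:ℂ)+1)^2 := by rw [hN]; push_cast; ring
  rw [hNc] at e3
  generalize G.coeff 0 = g0 at *
  generalize G.coeff 1 = g1 at *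
  generalize G.coeff 2 = g2 at *
  generalize G.coeff 3 = g3 at *
  obtain ⟨L, hLd⟩ : ∃ L : ℤ, L = 2*m+1 := ⟨_, rfl⟩
  have hLc : (2*(m:ℂ)+1) = (L:ℂ) := by rw [hLd]; push_cast; ring
  have hT : (3*(m:ℂ)^2+3*m+1) = (3*(L:ℂ)^2+1)/4 := by rw [← hLc]; ring
  rw [hT] at e3
  rw [hLc] at e3 hL
  field_simp at e3
  have key : 6 * L * z = g0 * (-(8*L^4-24*L^3+12*L^2+4) - 12*L^2*(L^2-1))
      + 6*L*(g1*(L^2+2*L^2-2*L) + g2*(-2*L) + g3) := by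
    have : (6 * L * z : ℂ) = g0 * (-(8*L^4-24*L^3+12*L^2+4) - 12*L^2*(L^2-1))
      + 6*L*(g1*(L^2+2*L^2-2*L) + g2*(-2*L) + g3) := by
      linear_combination e3 / 4
    exact_mod_cast this
  have hdvd : L ∣ g0 * 4 := ⟨g0 * (-(8*L^3-24*L^2+12*L) - 12*L*(L^2-1))
      + 6*(g1*(L^2+2*L^2-2*L) + g2*(-2*L) + g3) - 6 * z, by linear_combination key⟩
  have h4 : L ∣ 4 := (hG0.dvd_mul_left).mp hdvd
  have h4' : (2*m+1) ∣ 2^2 := by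
    have : ((2*m+1 : ℕ) : ℤ) ∣ ((2^2 : ℕ) : ℤ) := by push_cast; rw [← hLd]; simpa using h4
    exact_mod_cast this
  have := (Nat.prime_dvd_prime_iff_eq hp Nat.prime_two).mp (hp.dvd_of_dvd_pow h4')
  omega

/-- For an odd prime `L = 2m+1 ≥ 3`, the polynomial `f^{F,L}_{L²}` does not
have all integer coefficients; in particular its coefficient of `x³` is not an integer. -/
theorem stmt15 (m : ℕ) (hm : 1 ≤ m) (hp : Nat.Prime (2*m+1)) :
    (¬ ∀ i : ℕ, ∃ z : ℤ, (fF m ((2*m+1)^2)).coeff i = (z : ℂ)) ∧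
    ¬ ∃ z : ℤ, (fF m ((2*m+1)^2)).coeff 3 = (z : ℂ) :=
  by exact ⟨fun h => not_int m hm hp (h 3), not_int m hm hp⟩
end

section
/- Let L = 2m+1 ≥ 3 be an odd integer, let ζ_L = exp(2πi/L), and let Z be the L×L diagonal matrix with (Z)_{ii} = ζ_L^{m−i} for i = 0,…,L−1. Then for every integer k, (Z^k A^{F,L})^4 = I_L. -/
open Matrix Polynomial

theorem aux_ring {R : Type*} [Ring R] [Algebra ℂ R] (D E J P : R) (c l : ℂ) (hcl : c * l = 2)
    (hDE : D * E = 1) (hED : E * D = 1) (hPP : P * P = 1) (hPJ : P * J = J) (hJP : J * P = J)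
    (hPD : P * D = E * P) (hDP : D * P = P * E) (hJJ : J * J = l • J) (hJDJ : J * D * J = 0)
    (hJEJ : J * E * J = 0) :
    (D * (c • J - P)) ^ 4 = 1 := by
  have h2 : (D * (c • J - P)) ^ 2 = 1 - c • (D * J * E + J) := by
    have e1 : D * J * (D * J) = 0 := by
      rw [show D * J * (D * J) = D * (J * D * J) by noncomm_ring, hJDJ, mul_zero]
    have e2 : D * J * (D * P) = D * J * E := by
      rw [hDP, ← mul_assoc, mul_assoc D J P, hJP]
    have e3 : D * P * (D * J) = J := by
      rw [show D * P * (D * J) = D * (P * D) * J by noncomm_ring, hPD, ← mul_assoc, hDE,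
        one_mul, hPJ]
    have e4 : D * P * (D * P) = 1 := by
      rw [show D * P * (D * P) = D * (P * D) * P by noncomm_ring, hPD, ← mul_assoc, hDE,
        one_mul, hPP]
    rw [pow_two, mul_sub, mul_smul_comm, sub_mul, mul_sub, mul_sub, smul_mul_smul_comm,
      smul_mul_assoc, mul_smul_comm, e1, e2, e3, e4, smul_add, smul_zero]
    abel
  have hX : (D * J * E + J) * (D * J * E + J) = l • (D * J * E + J) := by
    have e1 : D * J * E * (D * J * E) = l • (D * J * E) := by
      rw [show D * J * E * (D * J * E) = D * J * (E * D) * (J * E) by noncomm_ring, hED, mul_one,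
        show D * J * (J * E) = D * (J * J) * E by noncomm_ring, hJJ, mul_smul_comm,
        smul_mul_assoc]
    have e2 : D * J * E * J = 0 := by
      rw [show D * J * E * J = D * (J * E * J) by noncomm_ring, hJEJ, mul_zero]
    have e3 : J * (D * J * E) = 0 := by
      rw [show J * (D * J * E) = (J * D * J) * E by noncomm_ring, hJDJ, zero_mul]
    rw [add_mul, mul_add, mul_add, e1, e2, e3, hJJ, smul_add]
    abel
  rw [show (4 : ℕ) = 2 * 2 from rfl, pow_mul, h2, pow_two, sub_mul, one_mul, mul_sub, mul_one,
    smul_mul_smul_comm, hX, smul_smul, mul_assoc c c l, hcl, mul_comm c 2, mul_smul, two_smul]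
  abel

theorem aux_ring_one {R : Type*} [Ring R] [Algebra ℂ R] (J P : R) (c l : ℂ) (hcl : c * l = 2)
    (hPP : P * P = 1) (hPJ : P * J = J) (hJP : J * P = J) (hJJ : J * J = l • J) :
    (c • J - P) ^ 4 = 1 := by
  have h2 : (c • J - P) ^ 2 = 1 := by
    rw [pow_two, sub_mul, mul_sub, mul_sub, smul_mul_smul_comm,
      smul_mul_assoc, mul_smul_comm, hPP, hPJ, hJP, hJJ, smul_smul, mul_assoc c c l, hcl,
      mul_comm c 2, mul_smul, two_smul]
    abel
  rw [show (4 : ℕ) = 2 * 2 from rfl, pow_mul, h2, one_pow]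

theorem aux_sum_s16 (m : ℕ) (w : ℂ) (h0 : w ≠ 0) (h1 : w ≠ 1) (hw : w ^ (2*m+1) = 1) :
    ∑ i : Fin (2*m+1), w ^ ((m : ℤ) - ((i : ℕ) : ℤ)) = 0 := by
  have h : ∀ i : Fin (2*m+1), w ^ ((m : ℤ) - ((i : ℕ) : ℤ)) = w ^ m * (w⁻¹) ^ (i : ℕ) := by
    intro i
    rw [zpow_sub₀ h0, zpow_natCast, zpow_natCast, inv_pow, div_eq_mul_inv]
  simp_rw [h]
  rw [← Finset.mul_sum, Fin.sum_univ_eq_sum_range (fun i => (w⁻¹) ^ i),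
    geom_sum_eq (by simpa using h1), inv_pow, hw]
  simp

/-- For odd `L = 2m+1 ≥ 3` and every `k ∈ ℤ`, `(Z^k A^{F,L})^4 = I_L`,
where `Z = diag(ζ_L^m, …, ζ_L^{−m})`. -/
theorem stmt16 (m : ℕ) (hm : 1 ≤ m) :
    ∀ k : ℤ, (ZmatPow (2*m+1) m k * coinF m) ^ 4 = 1 := by
  intro k
  have hL : (2 * (m:ℂ) + 1) ≠ 0 := by exact_mod_cast (Nat.succ_ne_zero (2*m))
  let J : Matrix (Fin (2*m+1)) (Fin (2*m+1)) ℂ := Matrix.of fun _ _ => 1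
  let P : Matrix (Fin (2*m+1)) (Fin (2*m+1)) ℂ := (Fin.revPerm : Equiv.Perm _).permMatrix ℂ
  set w : ℂ := zetaN (2*m+1) ^ k with hwdef
  have hz0 : zetaN (2*m+1) ≠ 0 := Complex.exp_ne_zero _
  have hw0 : w ≠ 0 := zpow_ne_zero _ hz0
  have hzL : zetaN (2*m+1) ^ (2*m+1) = 1 :=
    (Complex.isPrimitiveRoot_exp (2*m+1) (by omega)).pow_eq_one
  have hw : w ^ (2*m+1) = 1 := by
    rw [hwdef, ← zpow_natCast, ← _root_.zpow_mul, mul_comm k, _root_.zpow_mul, zpow_natCast, hzL, _root_.one_zpow]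
  have hP : ∀ i j, P i j = if i.rev = j then 1 else 0 := by
    intro i j
    simp [P, Equiv.Perm.permMatrix, PEquiv.toMatrix_apply, eq_comm]
  have hPl : ∀ (M : Matrix (Fin (2*m+1)) (Fin (2*m+1)) ℂ) i j, (P * M) i j = M i.rev j := by
    intro M i j
    simp [Matrix.mul_apply, hP]
  have hPr : ∀ (M : Matrix (Fin (2*m+1)) (Fin (2*m+1)) ℂ) i j, (M * P) i j = M i j.rev := by
    intro M i j
    simp [Matrix.mul_apply, hP, Fin.rev_eq_iff]
  have hA : coinF m = (2 / (2 * (m:ℂ) + 1)) • J - P := by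
    ext i j
    have : (i.rev = j) ↔ ((i:ℕ) + j = 2*m) := by
      rw [Fin.ext_iff, Fin.val_rev]; omega
    simp only [coinF, Matrix.sub_apply, Matrix.smul_apply, hP, this, J, Matrix.of_apply]
    split_ifs
    · rw [smul_eq_mul, mul_one]; field_simp; ring
    · simp
  have hD : ZmatPow (2*m+1) m k = Matrix.diagonal fun i : Fin (2*m+1) => w ^ ((m : ℤ) - ((i : ℕ) : ℤ)) := by
    unfold ZmatPow
    congr 1; ext i
    rw [hwdef, ← _root_.zpow_mul, mul_comm k]
  have hcl : (2 / (2 * (m:ℂ) + 1)) * (2 * (m:ℂ) + 1) = 2 := by field_simp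
  have hPP : P * P = 1 := by
    ext i j
    rw [hPl, hP, Fin.rev_rev, Matrix.one_apply]
  have hPJ : P * J = J := by ext i j; rw [hPl]; rfl
  have hJP : J * P = J := by ext i j; rw [hPr]; rfl
  have hJJ : J * J = (2 * (m:ℂ) + 1) • J := by
    ext i j; simp [J, Matrix.mul_apply]
  have hJdJ : ∀ d : Fin (2*m+1) → ℂ, ∑ i, d i = 0 → J * Matrix.diagonal d * J = 0 := by
    intro d hd
    ext i j
    simp [J, Matrix.mul_apply, Matrix.diagonal_apply, hd]
  rw [hA, hD]
  by_cases h1 : w = 1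
  · simp only [h1, _root_.one_zpow, Matrix.diagonal_one, one_mul]
    exact aux_ring_one J P _ _ hcl hPP hPJ hJP hJJ
  have hrev : ∀ i : Fin (2*m+1), ((m : ℤ) - ((i.rev : ℕ) : ℤ)) = -((m : ℤ) - ((i : ℕ) : ℤ)) := by
    intro i
    rw [Fin.val_rev]; omega
  refine aux_ring _ (Matrix.diagonal fun i : Fin (2*m+1) => w⁻¹ ^ ((m : ℤ) - ((i : ℕ) : ℤ))) J P _ _ hcl
    ?_ ?_ hPP hPJ hJP ?_ ?_ hJJ ?_ ?_
  · rw [Matrix.diagonal_mul_diagonal, ← Matrix.diagonal_one]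
    congr 1; ext i
    rw [← mul_zpow, mul_inv_cancel₀ hw0, _root_.one_zpow]
  · rw [Matrix.diagonal_mul_diagonal, ← Matrix.diagonal_one]
    congr 1; ext i
    rw [← mul_zpow, inv_mul_cancel₀ hw0, _root_.one_zpow]
  · ext i j
    rw [hPl, hPr, Matrix.diagonal_apply, Matrix.diagonal_apply, hrev, _root_.inv_zpow, _root_.zpow_neg]
    simp only [Fin.rev_eq_iff]
  · ext i j
    rw [hPl, hPr, Matrix.diagonal_apply, Matrix.diagonal_apply, hrev, _root_.inv_zpow', neg_neg]
    by_cases h : i.rev = j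
    · subst h; simp
    · rw [if_neg h, if_neg (fun h' => h (by rw [h', Fin.rev_rev]))]
  · exact hJdJ _ (aux_sum_s16 m w hw0 h1 hw)
  · exact hJdJ _ (aux_sum_s16 m w⁻¹ (inv_ne_zero hw0) (by simpa using h1) (by rw [inv_pow, hw, inv_one]))
end
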